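/- Assume that W_J is finite. Let w ∈ W and let w' = π_{J,δ}(w) ∈ W^J. Then there exists x ∈ W_{I(J,w',δ)} such that w →_{J,δ} w' x and w' x is an element of minimal length in the orbit W_J ·_δ {w} of w under δ-twisted partial conjugation. -/

import Mathlib

/-
Among the elements reachable from `w`, one has the form `a * x` with `a` minimal in its coset and
`x ∈ W_{I(J,a,δ)}`, and any two elements `a * x`, `a' * x'` of this form in one orbit have `a = a'`
and are conjugate under `W_{I(J,a,δ)}`. So `a = w'`, and since `a⁻¹ δ(·) a` permutes the simple
reflections of `W_{I(J,a,δ)}`, what remains is twisted conjugation in the finite Coxeter group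
`W_{I(J,a,δ)}`.

There we argue geometrically, after He and Nie. Elements of the orbit correspond to chambers of the
reflection arrangement, on which the twist and the given element act together by an isometry `g`;
the length of the element attached to a chamber is the number of walls separating that chamber from
its image. Flow a generic point along the gradient of `⟪u, g u⟫`, whose Hessian is `g + g⁻¹`. Each
wall it crosses changes the length by a nonpositive amount, and it tends to the top eigenspace `E`
of `g + g⁻¹`. On `E` the isometry `g` is a rotation by a fixed angle, so the walls not containing
`E` contribute an amount which depends only on that angle, and no longer on the chamber; the walls
containing `E` form a smaller arrangement, on which one induces.
-/

open CoxeterSystem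

variable {B : Type*} [Finite B] {W : Type*} [Group W] {M : CoxeterMatrix B}

namespace PartialConjugation

/-- The standard parabolic subgroup `W_J` of `W`, generated by the simple
reflections indexed by `J`. -/
def parab (cs : CoxeterSystem M W) (J : Set B) : Subgroup W :=
  Subgroup.closure (cs.simple '' J)

/-- The simple reflection `s_j` (for `j ∈ J`), viewed as an element of `W_J`. -/
def sJ (cs : CoxeterSystem M W) (J : Set B) (j : B) (hj : j ∈ J) : parab cs J :=
  ⟨cs.simple j, Subgroup.subset_closure ⟨j, hj, rfl⟩⟩

/-- `w ∈ W^J`: `w` is a minimal length representative of its left coset `w W_J`. -/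
def IsMinRep (cs : CoxeterSystem M W) (J : Set B) (w : W) : Prop :=
  ∀ v ∈ parab cs J, cs.length w ≤ cs.length (w * v)

variable (cs : CoxeterSystem M W) (J J' : Set B) (δ : parab cs J ≃* parab cs J')

/-- `δ` carries the set of simple reflections indexed by `J` onto the set of
simple reflections indexed by `J'`. -/
def MapsSimples : Prop :=
  (∀ j, ∀ hj : j ∈ J, ∃ j' ∈ J', (δ (sJ cs J j hj) : W) = cs.simple j') ∧
  (∀ j' ∈ J', ∃ j, ∃ hj : j ∈ J, (δ (sJ cs J j hj) : W) = cs.simple j')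

/-- `K` is a `w`-special subset of `J`. -/
def WSpecial (w : W) (K : Set B) : Prop :=
  K ⊆ J ∧ ∀ k ∈ K, ∃ j, ∃ hjJ : j ∈ J, j ∈ K ∧
    w * cs.simple k * w⁻¹ = (δ (sJ cs J j hjJ) : W)

/-- The set `I(J, w, δ)`: the union of all `w`-special subsets of `J`. -/
def Iset (w : W) : Set B := ⋃₀ {K | WSpecial cs J J' δ w K}

/-- The set `W_J ·_δ V = {δ(u) v u⁻¹ : u ∈ W_J, v ∈ V}`. -/
def orbSet (V : Set W) : Set W :=
  {x | ∃ u : parab cs J, ∃ v ∈ V, x = (δ u : W) * v * (u : W)⁻¹}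

/-- The orbit of `x` under the `δ`-twisted partial conjugation action of `W_J`. -/
def orbitOf (x : W) : Set W := orbSet cs J J' δ {x}

/-- The coset `w W_{I(J,w,δ)}`. -/
def coset (w : W) : Set W :=
  {x | ∃ v ∈ parab cs (Iset cs J J' δ w), x = w * v}

/-- Elementary step `v →_i v'` of `δ`-twisted conjugation: `v' = δ(s_i) v s_i`
with `i ∈ J` and `ℓ(v') ≤ ℓ(v)`. -/
def StepRel (v v' : W) : Prop :=
  ∃ i, ∃ hi : i ∈ J, v' = (δ (sJ cs J i hi) : W) * v * cs.simple i ∧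
    cs.length v' ≤ cs.length v

/-- The relation `v →_{J,δ} v'`. -/
def ToRel : W → W → Prop := Relation.ReflTransGen (StepRel cs J J' δ)

/-- The relation `v ≈_{J,δ} v'`. -/
def Approx (v v' : W) : Prop := ToRel cs J J' δ v v' ∧ ToRel cs J J' δ v' v

/-- The Bruhat order on `W`. -/
def bruhatLE (cs : CoxeterSystem M W) : W → W → Prop :=
  Relation.ReflTransGen
    (fun a b => ∃ t, cs.IsReflection t ∧ b = a * t ∧ cs.length a < cs.length b)

/-- The set of minimal length elements in the orbit of `x`. -/
def orbMin (x : W) : Set W :=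
  {y ∈ orbitOf cs J J' δ x | ∀ z ∈ orbitOf cs J J' δ x, cs.length y ≤ cs.length z}

section Arrangement

open scoped InnerProductSpace

variable {V : Type*} [NormedAddCommGroup V] [InnerProductSpace ℝ V]

/-- The finite set of normal vectors `Φ` of a hyperplane arrangement, at most two on each line
through the origin, permuted by the isometry `g`. -/
structure IsStableArrangement (Φ : Finset V) (g : V ≃ₗᵢ[ℝ] V) : Prop where
  map_mem_iff (a : V) : g a ∈ Φ ↔ a ∈ Φ
  eq_or_eq_neg {a : V} {c : ℝ} : a ∈ Φ → c • a ∈ Φ → c • a = a ∨ c • a = -a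
  zero_notMem : 0 ∉ Φ

/-- The side (`1`, `-1`, or `0` on the wall) of the hyperplane orthogonal to `a` on which `u`
lies. -/
noncomputable def side (u a : V) : ℤ := (SignType.sign ⟪u, a⟫_ℝ : ℤ)

/-- The vector `u` lies on no wall of the arrangement `Φ`. -/
def IsGeneric (Φ : Finset V) (u : V) : Prop := ∀ a ∈ Φ, ⟪u, a⟫_ℝ ≠ 0

/-- The number of normals `b` for which `b` and `g b` have `u` on the same side, minus the number
of those for which they do not.  It decreases with the number of walls separating the chambers of
`u` and `g⁻¹ u`. -/
noncomputable def agreement (Φ : Finset V) (g : V ≃ₗᵢ[ℝ] V) (u : V) : ℤ :=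
  ∑ b ∈ Φ, side u b * side u (g b)

/-- `u` and `u'` lie in equal or adjacent chambers, and the agreement does not decrease from `u`
to `u'`. -/
structure ChamberStep (Φ : Finset V) (g : V ≃ₗᵢ[ℝ] V) (u u' : V) : Prop where
  left : IsGeneric Φ u
  right : IsGeneric Φ u'
  exists_wall : ∃ a, ∀ b ∈ Φ, b ≠ a → b ≠ -a → side u b = side u' b
  agreement_le : agreement Φ g u ≤ agreement Φ g u'

lemma side_neg (u a : V) : side u (-a) = -side u a := by
  simp [side, inner_neg_right, Left.sign_neg]

lemma sign_eq_sign_of_mul_pos {x y : ℝ} (h : 0 < x * y) : SignType.sign x = SignType.sign y := by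
  rcases pos_and_pos_or_neg_and_neg_of_mul_pos h with ⟨hx, hy⟩ | ⟨hx, hy⟩ <;> simp [hx, hy]

lemma sign_eq_neg_sign_of_mul_neg {x y : ℝ} (h : x * y < 0) :
    SignType.sign x = -SignType.sign y := by
  rw [← Left.sign_neg]
  exact sign_eq_sign_of_mul_pos (by linarith)

lemma mul_pos_of_sign_eq_sign {x y : ℝ} (hx : x ≠ 0) (h : SignType.sign x = SignType.sign y) :
    0 < x * y := by
  rw [← sign_eq_one_iff, sign_mul, ← h, ← sign_mul, sign_eq_one_iff]
  exact mul_self_pos.2 hx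

lemma sign_add_sign_nonneg {x y : ℝ} (h : 0 < x + y) :
    (0 : ℤ) ≤ SignType.sign x + SignType.sign y := by
  rcases lt_trichotomy x 0 with hx | hx | hx <;> rcases lt_trichotomy y 0 with hy | hy | hy <;>
    simp [hx, hy] <;> linarith

lemma sign_mul_sign_add_sign_nonneg {s x y : ℝ} (h : 0 < s * (x + y)) :
    (0 : ℤ) ≤ SignType.sign s * (SignType.sign x + SignType.sign y) := by
  have := sign_add_sign_nonneg (x := s * x) (y := s * y) (by linarith)
  rwa [sign_mul, sign_mul, SignType.coe_mul, SignType.coe_mul, ← mul_add] at this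

lemma side_eq_side_of_mul_pos {u u' a : V} (h : 0 < ⟪u, a⟫_ℝ * ⟪u', a⟫_ℝ) :
    side u a = side u' a := by
  rw [side, sign_eq_sign_of_mul_pos h, side]

lemma mul_pos_of_side_eq_side {u u' a : V} (hu : ⟪u, a⟫_ℝ ≠ 0) (h : side u a = side u' a) :
    0 < ⟪u, a⟫_ℝ * ⟪u', a⟫_ℝ :=
  mul_pos_of_sign_eq_sign hu (by
    simp only [side] at h
    generalize SignType.sign ⟪u, a⟫_ℝ = s at h ⊢
    generalize SignType.sign ⟪u', a⟫_ℝ = t at h ⊢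
    decide +revert)

lemma IsGeneric.congr {Φ : Finset V} {u u' : V} (hu : IsGeneric Φ u)
    (h : ∀ b ∈ Φ, side u b = side u' b) : IsGeneric Φ u' := fun b hb h0 ↦ by
  simpa [h0] using mul_pos_of_side_eq_side (hu b hb) (h b hb)

lemma map_ne_and_ne_neg {g : V ≃ₗᵢ[ℝ] V} {h a : V} (hha : ⟪h, a⟫_ℝ = 0)
    (hne : ⟪h, g a⟫_ℝ + ⟪h, g.symm a⟫_ℝ ≠ 0) : g a ≠ a ∧ g a ≠ -a := by
  refine ⟨fun e ↦ hne ?_, fun e ↦ hne ?_⟩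
  · rw [e, g.symm_apply_eq.2 e.symm, hha, add_zero]
  · have e' : g.symm a = -a := g.symm_apply_eq.2 (by rw [map_neg, e, neg_neg])
    rw [e, e', inner_neg_right, hha, neg_zero, add_zero]

namespace IsStableArrangement

variable {Φ : Finset V} {g : V ≃ₗᵢ[ℝ] V}

lemma symm_mem_iff (hΦ : IsStableArrangement Φ g) (a : V) : g.symm a ∈ Φ ↔ a ∈ Φ := by
  rw [← hΦ.map_mem_iff, g.apply_symm_apply]

lemma sum_comp {R : Type*} [AddCommMonoid R] (hΦ : IsStableArrangement Φ g) (f : V → R) :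
    ∑ b ∈ Φ, f (g b) = ∑ b ∈ Φ, f b :=
  Finset.sum_equiv g.toEquiv (fun b ↦ (hΦ.map_mem_iff b).symm) fun _ _ ↦ rfl

lemma agreement_congr (hΦ : IsStableArrangement Φ g) {u u' : V}
    (h : ∀ b ∈ Φ, side u b = side u' b) : agreement Φ g u = agreement Φ g u' :=
  Finset.sum_congr rfl fun b hb ↦ by rw [h b hb, h _ ((hΦ.map_mem_iff b).2 hb)]

lemma chamberStep_of_side_eq (hΦ : IsStableArrangement Φ g) {u u' : V} (hu : IsGeneric Φ u)
    (h : ∀ b ∈ Φ, side u b = side u' b) : ChamberStep Φ g u u' :=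
  ⟨hu, hu.congr h, ⟨0, fun b hb _ _ ↦ h b hb⟩, (hΦ.agreement_congr h).le⟩

lemma agreement_sub (hΦ : IsStableArrangement Φ g) (u u' : V) :
    agreement Φ g u' - agreement Φ g u =
      ∑ b ∈ Φ, (side u' b - side u b) * (side u (g b) + side u (g.symm b)) +
        ∑ b ∈ Φ, (side u' b - side u b) * (side u' (g b) - side u (g b)) := by
  have h : ∑ b ∈ Φ, (side u' b - side u b) * side u (g.symm b) =
      ∑ b ∈ Φ, (side u' (g b) - side u (g b)) * side u b := by
    rw [← hΦ.sum_comp]; simp only [g.symm_apply_apply]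
  simp only [mul_add, Finset.sum_add_distrib, h]
  rw [agreement, agreement, ← Finset.sum_sub_distrib, ← Finset.sum_add_distrib,
    ← Finset.sum_add_distrib]
  exact Finset.sum_congr rfl fun b _ ↦ by ring

/-- The sides at `h` of `g a` and `g⁻¹ a` decide whether crossing the wall of `a` at `h` raises
or lowers the agreement. -/
lemma agreement_le_of_crossing (hΦ : IsStableArrangement Φ g) {u u' h a : V} (ha : a ∈ Φ)
    (hha : ⟪h, a⟫_ℝ = 0) (hu : ∀ b ∈ Φ, b ≠ a → b ≠ -a → side u b = side h b)
    (hu' : ∀ b ∈ Φ, b ≠ a → b ≠ -a → side u' b = side h b)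
    (hopp : ⟪u, a⟫_ℝ * ⟪u', a⟫_ℝ < 0)
    (hpos : 0 < ⟪u', a⟫_ℝ * (⟪h, g a⟫_ℝ + ⟪h, g.symm a⟫_ℝ)) :
    agreement Φ g u ≤ agreement Φ g u' := by
  have hne : ⟪h, g a⟫_ℝ + ⟪h, g.symm a⟫_ℝ ≠ 0 := right_ne_zero_of_mul hpos.ne'
  have hmap := map_ne_and_ne_neg hha hne
  have hsymm := map_ne_and_ne_neg (g := g.symm) hha (by rwa [g.symm_symm, add_comm])
  have hsame : ∀ b ∈ Φ, b ≠ a → b ≠ -a → side u' b - side u b = 0 := fun b hb h₁ h₂ ↦ by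
    rw [hu b hb h₁ h₂, hu' b hb h₁ h₂, sub_self]
  have hgain : 0 ≤ (side u' a - side u a) * (side u (g a) + side u (g.symm a)) := by
    rw [hu _ ((hΦ.map_mem_iff a).2 ha) hmap.1 hmap.2,
      hu _ ((hΦ.symm_mem_iff a).2 ha) hsymm.1 hsymm.2]
    have hopp' : side u a = -side u' a := by
      simp only [side, sign_eq_neg_sign_of_mul_neg hopp, SignType.coe_neg]
    have := sign_mul_sign_add_sign_nonneg hpos
    rw [hopp']
    unfold side
    linarith
  have hcross : ∀ b ∈ Φ, (side u' b - side u b) * (side u' (g b) - side u (g b)) = 0 := by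
    intro b hb
    have hgb := (hΦ.map_mem_iff b).2 hb
    by_cases h₁ : b = a
    · rw [h₁] at hgb ⊢; rw [hsame _ hgb hmap.1 hmap.2, mul_zero]
    by_cases h₂ : b = -a
    · rw [h₂, map_neg] at hgb ⊢
      rw [hsame _ hgb (fun e ↦ hmap.2 (neg_eq_iff_eq_neg.1 e)) (fun e ↦ hmap.1 (neg_injective e)),
        mul_zero]
    rw [hsame b hb h₁ h₂, zero_mul]
  rw [← sub_nonneg, hΦ.agreement_sub, Finset.sum_eq_zero hcross, add_zero]
  refine Finset.sum_nonneg fun b hb ↦ ?_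
  by_cases h₁ : b = a
  · rwa [h₁]
  by_cases h₂ : b = -a
  · rw [h₂, map_neg, map_neg]
    simp only [side_neg]
    linarith
  rw [hsame b hb h₁ h₂, zero_mul]

end IsStableArrangement

end Arrangement

section SignsAlongRotation

lemma sign_cos {y : ℝ} (h : Real.cos y ≠ 0) :
    (SignType.sign (Real.cos y) : ℤ) = ⌊y / Real.pi + 1 / 2⌋.negOnePow := by
  set n := ⌊y / Real.pi + 1 / 2⌋
  have hπ := Real.pi_pos
  have hy : y / Real.pi * Real.pi = y := by field_simp
  have hle : (n : ℝ) ≤ y / Real.pi + 1 / 2 := Int.floor_le _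
  have hlt : y / Real.pi + 1 / 2 < n + 1 := Int.lt_floor_add_one _
  have hcos : Real.cos y = (-1) ^ n * Real.cos (y - n * Real.pi) := by
    rw [Real.cos_sub_int_mul_pi, ← mul_assoc, ← mul_zpow]; norm_num
  have hpos : 0 < Real.cos (y - n * Real.pi) :=
    (Real.cos_nonneg_of_mem_Icc ⟨by nlinarith, by nlinarith⟩).lt_of_ne
      fun e ↦ h (by rw [hcos, ← e, mul_zero])
  rcases Int.even_or_odd n with hev | hodd
  · simp [hcos, hev.neg_one_zpow, sign_pos hpos, Int.negOnePow_even n hev]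
  · simp [hcos, hodd.neg_one_zpow, Left.sign_neg, sign_pos hpos, Int.negOnePow_odd n hodd]

lemma sign_cos_mul_sign_cos_add {y θ : ℝ} (hy : Real.cos y ≠ 0) (hyθ : Real.cos (y + θ) ≠ 0)
    (hθ₀ : 0 ≤ θ) (hθ : θ ≤ Real.pi) :
    (SignType.sign (Real.cos y) : ℤ) * SignType.sign (Real.cos (y + θ)) =
      1 - 2 * (⌊(y + θ) / Real.pi + 1 / 2⌋ - ⌊y / Real.pi + 1 / 2⌋) := by
  have hπ := Real.pi_pos
  have hle : y / Real.pi ≤ (y + θ) / Real.pi := by gcongr; linarith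
  have hlt : (y + θ) / Real.pi ≤ y / Real.pi + 1 := by
    rw [← div_self hπ.ne', ← add_div]; gcongr
  have h₁ : ⌊y / Real.pi + 1 / 2⌋ ≤ ⌊(y + θ) / Real.pi + 1 / 2⌋ :=
    Int.floor_le_floor (by linarith)
  have h₂ : ⌊(y + θ) / Real.pi + 1 / 2⌋ ≤ ⌊y / Real.pi + 1 / 2⌋ + 1 := by
    rw [← Int.floor_add_one]; exact Int.floor_le_floor (by linarith)
  obtain h | h : ⌊(y + θ) / Real.pi + 1 / 2⌋ = ⌊y / Real.pi + 1 / 2⌋ ∨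
      ⌊(y + θ) / Real.pi + 1 / 2⌋ = ⌊y / Real.pi + 1 / 2⌋ + 1 := by omega
  · rw [sign_cos hy, sign_cos hyθ, h, ← Units.val_mul, Int.units_mul_self]; simp
  · rw [sign_cos hy, sign_cos hyθ, h, Int.negOnePow_succ, ← Units.val_mul, mul_neg,
      Int.units_mul_self]; simp

lemma abs_sum_sign_mul_sign_sub_le {R φ θ : ℝ} (hθ₀ : 0 ≤ θ) (hθ : θ ≤ Real.pi) {a : ℕ → ℝ}
    (ha : ∀ k : ℕ, a k = R * Real.cos (φ + k * θ)) (hne : ∀ k, a k ≠ 0) (N : ℕ) :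
    |((∑ k ∈ Finset.range N, SignType.sign (a k) * SignType.sign (a (k + 1)) : ℤ) : ℝ) -
      N * (1 - 2 * (θ / Real.pi))| ≤ 2 := by
  let F : ℕ → ℤ := fun k ↦ ⌊(φ + k * θ) / Real.pi + 1 / 2⌋
  have hR : (SignType.sign R : ℤ) * SignType.sign R = 1 := by
    have : R ≠ 0 := left_ne_zero_of_mul (ha 0 ▸ hne 0)
    rcases lt_or_gt_of_ne this with h | h <;> simp [h]
  have hcos : ∀ k : ℕ, Real.cos (φ + k * θ) ≠ 0 := fun k ↦ right_ne_zero_of_mul (ha k ▸ hne k)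
  have hterm : ∀ k, (SignType.sign (a k) * SignType.sign (a (k + 1)) : ℤ) =
      1 - 2 * (F (k + 1) - F k) := fun k ↦ by
    have hk : φ + (k + 1 : ℕ) * θ = φ + k * θ + θ := by push_cast; ring
    have := sign_cos_mul_sign_cos_add (hcos k) (hk ▸ hcos (k + 1)) hθ₀ hθ
    simp only [F, ha, sign_mul, SignType.coe_mul, hk]
    rw [← this]
    linear_combination (SignType.sign (Real.cos (φ + k * θ)) *
      SignType.sign (Real.cos (φ + k * θ + θ)) : ℤ) * hR
  have hsum : (∑ k ∈ Finset.range N, SignType.sign (a k) * SignType.sign (a (k + 1)) : ℤ) =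
      N - 2 * (F N - F 0) := by
    rw [Finset.sum_congr rfl fun k _ ↦ hterm k, Finset.sum_sub_distrib, ← Finset.mul_sum,
      Finset.sum_range_sub F]
    simp
  have hN : (F N : ℝ) ≤ (φ + N * θ) / Real.pi + 1 / 2 := Int.floor_le _
  have hN' : (φ + N * θ) / Real.pi + 1 / 2 < F N + 1 := Int.lt_floor_add_one _
  have h0 : (F 0 : ℝ) ≤ (φ + (0 : ℕ) * θ) / Real.pi + 1 / 2 := Int.floor_le _
  have h0' : (φ + (0 : ℕ) * θ) / Real.pi + 1 / 2 < F 0 + 1 := Int.lt_floor_add_one _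
  have hshift : (φ + N * θ) / Real.pi = (φ + (0 : ℕ) * θ) / Real.pi + N * (θ / Real.pi) := by
    push_cast; ring
  rw [hsum, abs_le]
  push_cast
  constructor <;> linarith

lemma exists_eq_mul_cos_of_recurrence {θ : ℝ} {a : ℕ → ℝ}
    (hrec : ∀ k, a (k + 2) = 2 * Real.cos θ * a (k + 1) - a k)
    (hdeg : Real.sin θ = 0 → a 1 = Real.cos θ * a 0) :
    ∃ R φ : ℝ, ∀ k : ℕ, a k = R * Real.cos (φ + k * θ) := by
  obtain ⟨c, hc⟩ : ∃ c : ℝ, a 1 = a 0 * Real.cos θ - c * Real.sin θ := by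
    by_cases hs : Real.sin θ = 0
    · exact ⟨0, by rw [hdeg hs]; ring⟩
    · exact ⟨(a 0 * Real.cos θ - a 1) / Real.sin θ, by field_simp; ring⟩
  let z : ℂ := ⟨a 0, c⟩
  have hre : ‖z‖ * Real.cos z.arg = a 0 := Complex.norm_mul_cos_arg z
  have him : ‖z‖ * Real.sin z.arg = c := Complex.norm_mul_sin_arg z
  refine ⟨‖z‖, z.arg, fun k ↦ ?_⟩
  induction k using Nat.twoStepInduction with
  | zero => simp [hre]
  | one => rw [Nat.cast_one, one_mul, Real.cos_add, hc, ← hre, ← him]; ring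
  | more k ih₀ ih₁ =>
    have h₂ : z.arg + (k + 2 : ℕ) * θ = (z.arg + (k + 1 : ℕ) * θ) + θ := by push_cast; ring
    have h₀ : z.arg + k * θ = (z.arg + (k + 1 : ℕ) * θ) - θ := by push_cast; ring
    rw [hrec, ih₀, ih₁, h₂, h₀, Real.cos_add _ θ, Real.cos_sub _ θ]
    ring

end SignsAlongRotation

section Eigenvector

open scoped InnerProductSpace

variable {V : Type*} [NormedAddCommGroup V] [InnerProductSpace ℝ V] {g : V ≃ₗᵢ[ℝ] V}

lemma inner_map_eq_inner_symm (x y : V) : ⟪x, g y⟫_ℝ = ⟪g.symm x, y⟫_ℝ := by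
  rw [← g.inner_map_map (g.symm x), g.apply_symm_apply]

lemma two_mul_inner_map_self {l : ℝ} {p : V} (hp : g p + g.symm p = l • p) :
    2 * ⟪g p, p⟫_ℝ = l * ‖p‖ ^ 2 := by
  rw [← real_inner_self_eq_norm_sq, ← real_inner_smul_left p p l, ← hp, inner_add_left,
    ← inner_map_eq_inner_symm, real_inner_comm (g p) p, two_mul]

lemma abs_le_two_of_map_add_symm {l : ℝ} {p : V} (hp : g p + g.symm p = l • p) (hp₀ : p ≠ 0) :
    |l| ≤ 2 := by
  have h : |l| * ‖p‖ ≤ 2 * ‖p‖ := by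
    rw [← Real.norm_eq_abs, ← norm_smul, ← hp]
    calc ‖g p + g.symm p‖ ≤ ‖g p‖ + ‖g.symm p‖ := norm_add_le _ _
      _ = 2 * ‖p‖ := by rw [g.norm_map, g.symm.norm_map, two_mul]
  exact le_of_mul_le_mul_right h (norm_pos_iff.2 hp₀)

lemma symm_apply_eq_smul_of_sq_eq_one {c : ℝ} {p : V} (hp : g p + g.symm p = (2 * c) • p)
    (hc : c ^ 2 = 1) : g.symm p = c • p := by
  have h : ⟪g.symm p, p⟫_ℝ = c * ‖p‖ ^ 2 := by
    rw [← inner_map_eq_inner_symm, real_inner_comm]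
    linarith [two_mul_inner_map_self hp]
  rw [← sub_eq_zero, ← norm_eq_zero, ← sq_eq_zero_iff, norm_sub_sq_real, g.symm.norm_map,
    norm_smul, real_inner_smul_right, h, mul_pow, Real.norm_eq_abs, sq_abs]
  linear_combination (-‖p‖ ^ 2) * hc

/-- Along a `g`-orbit, the scalar products with an eigenvector of `g + g⁻¹` are
equally spaced samples of a cosine. -/
lemma exists_inner_pow_map_eq_mul_cos {θ : ℝ} {p : V}
    (hp : g p + g.symm p = (2 * Real.cos θ) • p) (a : V) :
    ∃ R φ : ℝ, ∀ k : ℕ, ⟪p, (g ^ k) a⟫_ℝ = R * Real.cos (φ + k * θ) := by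
  have hsucc : ∀ k : ℕ, (g ^ (k + 1)) a = g ((g ^ k) a) := fun k ↦ by rw [pow_succ']; rfl
  refine exists_eq_mul_cos_of_recurrence (fun k ↦ ?_) fun hs ↦ ?_
  · rw [← real_inner_smul_left, ← hp, inner_add_left, hsucc (k + 1), hsucc k, g.inner_map_map,
      ← inner_map_eq_inner_symm]
    ring
  · have hc : Real.cos θ ^ 2 = 1 := by linear_combination Real.sin_sq_add_cos_sq θ - hs * Real.sin θ
    rw [pow_one, inner_map_eq_inner_symm, symm_apply_eq_smul_of_sq_eq_one hp hc,
      real_inner_smul_left, pow_zero]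
    rfl

variable {Φ : Finset V}

namespace IsStableArrangement

lemma pow_map_mem (hΦ : IsStableArrangement Φ g) {a : V} (ha : a ∈ Φ) (k : ℕ) :
    (g ^ k) a ∈ Φ := by
  induction k with
  | zero => simpa using ha
  | succ k ih => rw [pow_succ']; exact (hΦ.map_mem_iff _).2 ih

lemma sum_pow_comp {R : Type*} [AddCommMonoid R] (hΦ : IsStableArrangement Φ g) (f : V → R)
    (k : ℕ) : ∑ b ∈ Φ, f ((g ^ k) b) = ∑ b ∈ Φ, f b := by
  induction k with
  | zero => simp
  | succ k ih => rw [← ih, ← hΦ.sum_comp fun b ↦ f ((g ^ k) b)]; simp [pow_succ]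

lemma natCast_mul_agreement (hΦ : IsStableArrangement Φ g) (p : V) (N : ℕ) :
    N * agreement Φ g p =
      ∑ a ∈ Φ, ∑ k ∈ Finset.range N, side p ((g ^ k) a) * side p ((g ^ (k + 1)) a) := by
  rw [Finset.sum_comm, Finset.sum_congr rfl fun k _ ↦ ?_, Finset.sum_const, Finset.card_range,
    nsmul_eq_mul]
  rw [agreement, ← hΦ.sum_pow_comp (fun b ↦ side p b * side p (g b)) k]
  exact Finset.sum_congr rfl fun b _ ↦ by rw [pow_succ']; rfl

/-- `N` times the agreement is a sum over `g`-orbits of length `N`, along each of which the signs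
of a cosine are counted up to an error of `2`; then let `N` tend to infinity. -/
lemma agreement_eq_of_map_add_symm (hΦ : IsStableArrangement Φ g) {l : ℝ} {p : V}
    (hp : g p + g.symm p = l • p) (hgen : IsGeneric Φ p) :
    (agreement Φ g p : ℝ) = Φ.card * (1 - 2 * (Real.arccos (l / 2) / Real.pi)) := by
  rcases Φ.eq_empty_or_nonempty with rfl | ⟨a₀, ha₀⟩
  · simp [agreement]
  have hp₀ : p ≠ 0 := by rintro rfl; exact hgen a₀ ha₀ (inner_zero_left _)
  have hl := abs_le.1 (abs_le_two_of_map_add_symm hp hp₀)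
  set θ := Real.arccos (l / 2)
  have hcos : l = 2 * Real.cos θ := by
    rw [Real.cos_arccos (by linarith) (by linarith)]; ring
  rw [hcos] at hp
  set D := (agreement Φ g p : ℝ) - Φ.card * (1 - 2 * (θ / Real.pi)) with hD
  have hbound : ∀ N : ℕ, N * |D| ≤ 2 * Φ.card := fun N ↦ by
    have horbit : ∀ a ∈ Φ, |((∑ k ∈ Finset.range N,
        side p ((g ^ k) a) * side p ((g ^ (k + 1)) a) : ℤ) : ℝ) -
          N * (1 - 2 * (θ / Real.pi))| ≤ 2 := fun a ha ↦ by
      obtain ⟨R, φ, hR⟩ := exists_inner_pow_map_eq_mul_cos hp a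
      exact abs_sum_sign_mul_sign_sub_le (Real.arccos_nonneg _) (Real.arccos_le_pi _) hR
        (fun k ↦ hgen _ (hΦ.pow_map_mem ha k)) N
    have hsum : N * D = ∑ a ∈ Φ, (((∑ k ∈ Finset.range N,
        side p ((g ^ k) a) * side p ((g ^ (k + 1)) a) : ℤ) : ℝ) -
          N * (1 - 2 * (θ / Real.pi))) := by
      rw [Finset.sum_sub_distrib, ← Int.cast_sum, ← hΦ.natCast_mul_agreement, Finset.sum_const,
        nsmul_eq_mul, hD]
      push_cast
      ring
    calc N * |D| = |N * D| := by rw [abs_mul, Nat.abs_cast]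
      _ ≤ ∑ _a ∈ Φ, (2 : ℝ) := by
        rw [hsum]; exact (Finset.abs_sum_le_sum_abs _ _).trans (Finset.sum_le_sum horbit)
      _ = 2 * Φ.card := by rw [Finset.sum_const, nsmul_eq_mul, mul_comm]
  by_contra hne
  obtain ⟨N, hN⟩ := exists_lt_nsmul (abs_pos.2 (sub_ne_zero.2 hne)) (2 * Φ.card : ℝ)
  exact absurd (hbound N) (by rwa [nsmul_eq_mul, ← not_le] at hN)

end IsStableArrangement

end Eigenvector

section ExpFlow

open MeasureTheory Filter Topology
open scoped InnerProductSpace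

variable {V : Type*} [NormedAddCommGroup V] [InnerProductSpace ℝ V] {ι : Type*} [Fintype ι]

/-- The exponential `exp (t T) v` of the operator `T` with eigenvalues `μ` in the orthonormal
basis `b`, applied to `v`. -/
noncomputable def expFlow (b : OrthonormalBasis ι ℝ V) (μ : ι → ℝ) (t : ℝ) (v : V) : V :=
  ∑ i, (Real.exp (t * μ i) * ⟪b i, v⟫_ℝ) • b i

variable (b : OrthonormalBasis ι ℝ V) (μ : ι → ℝ)

lemma inner_expFlow (t : ℝ) (v a : V) :
    ⟪expFlow b μ t v, a⟫_ℝ = ∑ i, Real.exp (t * μ i) * ⟪b i, v⟫_ℝ * ⟪b i, a⟫_ℝ := by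
  simp only [expFlow, sum_inner, real_inner_smul_left]

lemma inner_basis_expFlow (i : ι) (t : ℝ) (v : V) :
    ⟪b i, expFlow b μ t v⟫_ℝ = Real.exp (t * μ i) * ⟪b i, v⟫_ℝ :=
  b.orthonormal.inner_right_fintype _ i

lemma ext_inner_basis {b : OrthonormalBasis ι ℝ V} {x y : V}
    (h : ∀ i, ⟪b i, x⟫_ℝ = ⟪b i, y⟫_ℝ) : x = y :=
  InnerProductSpace.ext_inner_left_basis b.toBasis fun i ↦ by
    rw [b.coe_toBasis]; exact h i

lemma expFlow_zero (v : V) : expFlow b μ 0 v = v :=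
  ext_inner_basis fun i ↦ by rw [inner_basis_expFlow, zero_mul, Real.exp_zero, one_mul]

lemma expFlow_neg_expFlow (t : ℝ) (v : V) : expFlow b μ (-t) (expFlow b μ t v) = v :=
  ext_inner_basis fun i ↦ by
    rw [inner_basis_expFlow, inner_basis_expFlow, ← mul_assoc, ← Real.exp_add]; simp

variable {b μ} {T : V → V}

lemma hasDerivAt_inner_expFlow (hT : ∀ i a, ⟪b i, T a⟫_ℝ = μ i * ⟪b i, a⟫_ℝ) (t : ℝ) (v a : V) :
    HasDerivAt (fun t ↦ ⟪expFlow b μ t v, a⟫_ℝ) ⟪expFlow b μ t v, T a⟫_ℝ t := by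
  simp only [inner_expFlow, hT]
  refine HasDerivAt.fun_sum fun i _ ↦ ?_
  refine ((((hasDerivAt_id' t).mul_const (μ i)).exp.mul_const ⟪b i, v⟫_ℝ).mul_const
    ⟪b i, a⟫_ℝ).congr_deriv ?_
  ring

lemma inner_expFlow_of_eq_smul (hT : ∀ i a, ⟪b i, T a⟫_ℝ = μ i * ⟪b i, a⟫_ℝ) {a : V} {r : ℝ}
    (ha : T a = r • a) (t : ℝ) (v : V) :
    ⟪expFlow b μ t v, a⟫_ℝ = Real.exp (t * r) * ⟪v, a⟫_ℝ := by
  rw [inner_expFlow, ← b.sum_inner_mul_inner, Finset.mul_sum]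
  refine Finset.sum_congr rfl fun i _ ↦ ?_
  have h := hT i a
  rw [ha, real_inner_smul_right] at h
  rw [real_inner_comm v, mul_assoc]
  by_cases h₀ : ⟪b i, a⟫_ℝ = 0
  · rw [h₀, mul_zero, mul_zero, mul_zero]
  · rw [mul_right_cancel₀ h₀ h]

section Measure

variable [FiniteDimensional ℝ V] [MeasurableSpace V] [BorelSpace V]

lemma volume_setOf_inner_eq_zero {a : V} (ha : a ≠ 0) : volume {v : V | ⟪a, v⟫_ℝ = 0} = 0 := by
  have h : {v : V | ⟪a, v⟫_ℝ = 0} = LinearMap.ker (innerₛₗ ℝ a) := by ext; simp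
  rw [h]
  refine Measure.addHaar_submodule _ _ fun htop ↦ ha ?_
  have : a ∈ LinearMap.ker (innerₛₗ ℝ a) := htop ▸ Submodule.mem_top
  simpa using this

lemma ae_inner_ne_zero {a : V} (ha : a ≠ 0) : ∀ᵐ v : V, ⟪v, a⟫_ℝ ≠ 0 := by
  simp only [real_inner_comm]
  rw [ae_iff]
  simpa using volume_setOf_inner_eq_zero ha

/-- The trajectories meeting a subspace of codimension two sweep out the image of a hyperplane
under a smooth map: the coordinate along `a` records the time. -/
lemma ae_inner_expFlow_ne_zero (b : OrthonormalBasis ι ℝ V) (μ : ι → ℝ) {a c : V} (ha : a ≠ 0)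
    (hc : ∀ r : ℝ, c ≠ r • a) :
    ∀ᵐ v : V, ∀ t, ⟪expFlow b μ t v, a⟫_ℝ = 0 → ⟪expFlow b μ t v, c⟫_ℝ ≠ 0 := by
  have haa : ⟪a, a⟫_ℝ ≠ 0 := inner_self_ne_zero.2 ha
  set c' : V := c - (⟪c, a⟫_ℝ / ⟪a, a⟫_ℝ) • a with hc'
  have hc'₀ : c' ≠ 0 := fun e ↦ hc _ (sub_eq_zero.1 e)
  have hc'a : ⟪c', a⟫_ℝ = 0 := by
    rw [hc', inner_sub_left, real_inner_smul_left, div_mul_cancel₀ _ haa, sub_self]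
  let F : V → V := fun y ↦ expFlow b μ (-⟪a, y⟫_ℝ) (y - (⟪a, y⟫_ℝ / ⟪a, a⟫_ℝ) • a)
  have hF : Differentiable ℝ F := by
    simp only [F, expFlow, ← innerSL_apply_apply (𝕜 := ℝ)]
    fun_prop
  have hnull : volume (F '' {y | ⟪c', y⟫_ℝ = 0}) = 0 :=
    addHaar_image_eq_zero_of_differentiableOn_of_addHaar_eq_zero volume hF.differentiableOn
      (volume_setOf_inner_eq_zero hc'₀)
  rw [ae_iff]
  refine measure_mono_null (fun v hv ↦ ?_) hnull
  simp only [ne_eq, not_forall, not_not, Set.mem_ofPred_eq, exists_prop] at hv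
  obtain ⟨t, hta, htc⟩ := hv
  rw [real_inner_comm] at hta htc
  refine ⟨expFlow b μ t v + (t / ⟪a, a⟫_ℝ) • a, ?_, ?_⟩
  · rw [Set.mem_ofPred_eq, inner_add_right, real_inner_smul_right, hc'a, hc', inner_sub_left,
      real_inner_smul_left, hta, htc]
    ring
  · have hat : ⟪a, expFlow b μ t v + (t / ⟪a, a⟫_ℝ) • a⟫_ℝ = t := by
      rw [inner_add_right, hta, real_inner_smul_right, div_mul_cancel₀ _ haa, zero_add]
    simp only [F, hat, add_sub_cancel_right, expFlow_neg_expFlow]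

end Measure

lemma tendsto_exp_mul_inner_expFlow [FiniteDimensional ℝ V] {T : V →ₗ[ℝ] V} (hsymm : T.IsSymmetric)
    (hb : ∀ i, T (b i) = μ i • b i) {l : ℝ} {a : V} (hl : ∀ i, ⟪b i, a⟫_ℝ ≠ 0 → μ i ≤ l)
    (v : V) :
    Tendsto (fun t ↦ Real.exp (-(t * l)) * ⟪expFlow b μ t v, a⟫_ℝ) atTop
      (𝓝 ⟪(Module.End.eigenspace T l).starProjection v, a⟫_ℝ) := by
  have hproj : ∀ i, ⟪(Module.End.eigenspace T l).starProjection v, b i⟫_ℝ =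
      if μ i = l then ⟪v, b i⟫_ℝ else 0 := fun i ↦ by
    rw [Submodule.inner_starProjection_left_eq_right]
    split_ifs with hi
    · rw [Submodule.starProjection_eq_self_iff.2
        (Module.End.mem_eigenspace_iff.2 (by rw [hb, hi]))]
    · rw [(Submodule.starProjection_apply_eq_zero_iff _).2, inner_zero_right]
      refine (Submodule.mem_orthogonal _ _).2 fun e he ↦ ?_
      have h := hsymm e (b i)
      rw [Module.End.mem_eigenspace_iff.1 he, hb, real_inner_smul_left,
        real_inner_smul_right] at h
      exact (mul_eq_mul_right_iff.1 h).resolve_left (Ne.symm hi)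
  rw [← b.sum_inner_mul_inner]
  simp only [inner_expFlow, Finset.mul_sum, hproj]
  refine tendsto_finsetSum _ fun i _ ↦ ?_
  by_cases ha : ⟪b i, a⟫_ℝ = 0
  · simp [ha]
  have hexp : ∀ t, Real.exp (-(t * l)) * (Real.exp (t * μ i) * ⟪b i, v⟫_ℝ * ⟪b i, a⟫_ℝ) =
      Real.exp (t * (μ i - l)) * ⟪v, b i⟫_ℝ * ⟪b i, a⟫_ℝ := fun t ↦ by
    rw [mul_sub, sub_eq_neg_add, Real.exp_add, real_inner_comm v]; ring
  simp only [hexp]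
  refine Tendsto.mul_const _ ?_
  split_ifs with hi
  · simp [hi]
  · rw [← zero_mul ⟪v, b i⟫_ℝ]
    exact (Real.tendsto_exp_atBot.comp (tendsto_id.atTop_mul_const_of_neg
      (sub_neg.2 ((hl i ha).lt_of_ne hi)))).mul_const _

lemma eventually_inner_expFlow_mul_pos [FiniteDimensional ℝ V] {T : V →ₗ[ℝ] V}
    (hsymm : T.IsSymmetric) (hb : ∀ i, T (b i) = μ i • b i) {l : ℝ} {a v : V}
    (hl : ∀ i, ⟪b i, a⟫_ℝ ≠ 0 → μ i ≤ l)
    (hv : ⟪(Module.End.eigenspace T l).starProjection v, a⟫_ℝ ≠ 0) :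
    ∀ᶠ t in atTop,
      0 < ⟪expFlow b μ t v, a⟫_ℝ * ⟪(Module.End.eigenspace T l).starProjection v, a⟫_ℝ := by
  filter_upwards [((tendsto_exp_mul_inner_expFlow hsymm hb hl v).mul_const _).eventually
    (lt_mem_nhds (mul_self_pos.2 hv))] with t ht
  rw [mul_assoc] at ht
  exact pos_of_mul_pos_right ht (Real.exp_pos _).le

lemma exists_max_eigenvalue (b : OrthonormalBasis ι ℝ V) (μ : ι → ℝ) {Φ : Finset V}
    (h₀ : 0 ∉ Φ) (hne : Φ.Nonempty) :
    ∃ j, (∃ a ∈ Φ, ⟪b j, a⟫_ℝ ≠ 0) ∧ ∀ a ∈ Φ, ∀ i, ⟪b i, a⟫_ℝ ≠ 0 → μ i ≤ μ j := by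
  classical
  let I := Finset.univ.filter fun i ↦ ∃ a ∈ Φ, ⟪b i, a⟫_ℝ ≠ 0
  have hI : I.Nonempty := by
    obtain ⟨a, ha⟩ := hne
    by_contra! h
    have h_zero : a = 0 := ext_inner_basis (b := b) fun i ↦ by
      by_contra hi
      exact Finset.notMem_empty i (h ▸ Finset.mem_filter.2
        ⟨Finset.mem_univ i, a, ha, by rwa [inner_zero_right] at hi⟩)
    exact h₀ (h_zero ▸ ha)
  obtain ⟨j, hj, hmax⟩ := Finset.exists_max_image I μ hI
  exact ⟨j, (Finset.mem_filter.1 hj).2,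
    fun a ha i hi ↦ hmax i (Finset.mem_filter.2 ⟨Finset.mem_univ i, a, ha, hi⟩)⟩

end ExpFlow

section Flow

open Filter Topology
open scoped InnerProductSpace

variable {V : Type*} [NormedAddCommGroup V] [InnerProductSpace ℝ V] {Φ : Finset V}
  {g : V ≃ₗᵢ[ℝ] V}

/-- The closed chamber of the arrangement `Φ` containing the generic vector `u`. -/
def closedChamber (Φ : Finset V) (u : V) : Set V :=
  {x | ∀ a ∈ Φ, 0 ≤ ⟪x, a⟫_ℝ * ⟪u, a⟫_ℝ}

lemma closedChamber_eq_setOf_side (u : V) :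
    closedChamber Φ u = {x | ∀ a ∈ Φ, 0 ≤ ⟪x, a⟫_ℝ * (SignType.sign ⟪u, a⟫_ℝ : ℝ)} := by
  refine Set.ext fun x ↦ forall₂_congr fun a _ ↦ ?_
  rcases eq_or_ne ⟪u, a⟫_ℝ 0 with h | h
  · simp [h]
  · conv_lhs => rw [← sign_mul_abs ⟪u, a⟫_ℝ, ← mul_assoc]
    exact mul_nonneg_iff_of_pos_right (abs_pos.2 h)

lemma isClosed_closedChamber (u : V) : IsClosed (closedChamber Φ u) := by
  simp only [closedChamber, Set.ofPred_forall]
  exact isClosed_biInter fun a _ ↦ isClosed_le continuous_const (by fun_prop)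

lemma isClosed_biUnion_closedChamber (S : Set V) : IsClosed (⋃ u ∈ S, closedChamber Φ u) := by
  let chamberOfSigns : (Φ → SignType) → Set V := fun s ↦ {x | ∀ a : Φ, 0 ≤ ⟪x, a⟫_ℝ * (s a : ℝ)}
  have hfin : (closedChamber Φ '' S).Finite := by
    refine (Set.finite_range chamberOfSigns).subset ?_
    rintro _ ⟨u, -, rfl⟩
    refine ⟨fun a ↦ SignType.sign ⟪u, a⟫_ℝ, ?_⟩
    rw [closedChamber_eq_setOf_side]
    simp [chamberOfSigns]
  rw [← Set.sUnion_image, Set.sUnion_eq_biUnion]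
  refine hfin.isClosed_biUnion ?_
  rintro _ ⟨u, -, rfl⟩
  exact isClosed_closedChamber u

lemma inner_mul_inner_pos_of_mem_closedChamber {u x a : V} (hu : IsGeneric Φ u)
    (hx : x ∈ closedChamber Φ u) (ha : a ∈ Φ) (h : ⟪x, a⟫_ℝ ≠ 0) : 0 < ⟪u, a⟫_ℝ * ⟪x, a⟫_ℝ := by
  rw [mul_comm]
  exact (hx a ha).lt_of_ne (mul_ne_zero h (hu a ha)).symm

lemma eventually_mul_pos {f : ℝ → ℝ} {t : ℝ} (hf : ContinuousAt f t) (h : f t ≠ 0) :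
    ∀ᶠ x in 𝓝[>] t, 0 < f x * f t :=
  nhdsWithin_le_nhds ((hf.tendsto.mul_const (f t)).eventually (lt_mem_nhds (mul_self_pos.2 h)))

lemma eventually_mul_deriv_pos {f : ℝ → ℝ} {t d : ℝ} (hf : HasDerivAt f d t) (h : f t = 0)
    (hd : d ≠ 0) : ∀ᶠ x in 𝓝[>] t, 0 < f x * d := by
  have hslope := (hf.tendsto_slope.mul_const d).eventually (lt_mem_nhds (mul_self_pos.2 hd))
  filter_upwards [nhdsWithin_mono t (fun x hx ↦ ne_of_gt hx) hslope, self_mem_nhdsWithin]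
    with x hx htx
  rw [slope_def_field, h, sub_zero, div_mul_eq_mul_div] at hx
  exact (div_pos_iff_of_pos_right (sub_pos.2 htx)).1 hx

/-- A curve with velocity `g γ + g⁻¹ γ` which meets the walls of `Φ` transversally and one at a
time. -/
structure IsTransverseFlowLine (Φ : Finset V) (g : V ≃ₗᵢ[ℝ] V) (γ : ℝ → V) : Prop where
  continuous : Continuous γ
  hasDerivAt (a : V) (t : ℝ) : HasDerivAt (fun t ↦ ⟪γ t, a⟫_ℝ) ⟪γ t, g a + g.symm a⟫_ℝ t
  deriv_ne_zero {a : V} {t : ℝ} : a ∈ Φ → ⟪γ t, a⟫_ℝ = 0 → ⟪γ t, g a + g.symm a⟫_ℝ ≠ 0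
  exists_eq_smul {a c : V} {t : ℝ} :
    a ∈ Φ → c ∈ Φ → ⟪γ t, a⟫_ℝ = 0 → ⟪γ t, c⟫_ℝ = 0 → ∃ r : ℝ, c = r • a

lemma IsStableArrangement.chamberStep_of_wall (hΦ : IsStableArrangement Φ g) {u x h a : V}
    (hgen : IsGeneric Φ u) (ha : a ∈ Φ) (hha : ⟪h, a⟫_ℝ = 0)
    (hu : ∀ c ∈ Φ, c ≠ a → c ≠ -a → 0 < ⟪u, c⟫_ℝ * ⟪h, c⟫_ℝ)
    (hx : ∀ c ∈ Φ, c ≠ a → c ≠ -a → 0 < ⟪x, c⟫_ℝ * ⟪h, c⟫_ℝ)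
    (hpos : 0 < ⟪x, a⟫_ℝ * ⟪h, g a + g.symm a⟫_ℝ) : ChamberStep Φ g u x := by
  have hsame : ∀ c ∈ Φ, c ≠ a → c ≠ -a → side u c = side x c := fun c hc h₁ h₂ ↦
    (side_eq_side_of_mul_pos (hu c hc h₁ h₂)).trans (side_eq_side_of_mul_pos (hx c hc h₁ h₂)).symm
  have hxa : ⟪x, a⟫_ℝ ≠ 0 := left_ne_zero_of_mul hpos.ne'
  rcases (mul_ne_zero (hgen a ha) hxa).lt_or_gt with hlt | hgt
  · refine ⟨hgen, fun c hc ↦ ?_, ⟨a, hsame⟩, hΦ.agreement_le_of_crossing ha hha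
      (fun c hc h₁ h₂ ↦ side_eq_side_of_mul_pos (hu c hc h₁ h₂))
      (fun c hc h₁ h₂ ↦ side_eq_side_of_mul_pos (hx c hc h₁ h₂)) hlt ?_⟩
    · by_cases h₁ : c = a
      · rwa [h₁]
      by_cases h₂ : c = -a
      · rwa [h₂, inner_neg_right, neg_ne_zero]
      exact left_ne_zero_of_mul (hx c hc h₁ h₂).ne'
    · rwa [inner_add_right] at hpos
  · refine hΦ.chamberStep_of_side_eq hgen fun c hc ↦ ?_
    by_cases h₁ : c = a
    · rw [h₁, side_eq_side_of_mul_pos hgt]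
    by_cases h₂ : c = -a
    · rw [h₂, side_neg, side_neg, side_eq_side_of_mul_pos hgt]
    exact hsame c hc h₁ h₂

lemma IsGeneric.of_reflTransGen {u u' : V} (hu : IsGeneric Φ u)
    (h : Relation.ReflTransGen (ChamberStep Φ g) u u') : IsGeneric Φ u' := by
  induction h with
  | refl => exact hu
  | tail _ h _ => exact h.right

namespace IsTransverseFlowLine

variable {γ : ℝ → V}

lemma eventually_chamberStep (hγ : IsTransverseFlowLine Φ g γ) (hΦ : IsStableArrangement Φ g)
    {u : V} {t : ℝ} (hu : IsGeneric Φ u) (ht : γ t ∈ closedChamber Φ u) :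
    ∀ᶠ x in 𝓝[>] t, ChamberStep Φ g u (γ x) := by
  have hsame : ∀ᶠ x in 𝓝[>] t, ∀ c ∈ Φ, ⟪γ t, c⟫_ℝ ≠ 0 → 0 < ⟪γ x, c⟫_ℝ * ⟪γ t, c⟫_ℝ :=
    (Finset.eventually_all Φ).2 fun c _ ↦ by
      by_cases h : ⟪γ t, c⟫_ℝ = 0
      · exact .of_forall fun _ h' ↦ absurd h h'
      · exact (eventually_mul_pos (hγ.hasDerivAt c t).continuousAt h).mono fun _ hx _ ↦ hx
  by_cases hwall : ∀ c ∈ Φ, ⟪γ t, c⟫_ℝ ≠ 0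
  · filter_upwards [hsame] with x hx
    exact hΦ.chamberStep_of_side_eq hu fun c hc ↦
      (side_eq_side_of_mul_pos (inner_mul_inner_pos_of_mem_closedChamber hu ht hc
        (hwall c hc))).trans (side_eq_side_of_mul_pos (hx c hc (hwall c hc))).symm
  push Not at hwall
  obtain ⟨a, ha, hta⟩ := hwall
  have hother : ∀ c ∈ Φ, c ≠ a → c ≠ -a → ⟪γ t, c⟫_ℝ ≠ 0 := fun c hc h₁ h₂ htc ↦ by
    obtain ⟨r, rfl⟩ := hγ.exists_eq_smul ha hc hta htc
    exact (hΦ.eq_or_eq_neg ha hc).elim h₁ h₂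
  filter_upwards [hsame, eventually_mul_deriv_pos (hγ.hasDerivAt a t) hta
    (hγ.deriv_ne_zero ha hta)] with x hx hxa
  exact hΦ.chamberStep_of_wall hu ha hta
    (fun c hc h₁ h₂ ↦ inner_mul_inner_pos_of_mem_closedChamber hu ht hc (hother c hc h₁ h₂))
    (fun c hc h₁ h₂ ↦ hx c hc (hother c hc h₁ h₂)) hxa

lemma exists_reflTransGen_mem_closedChamber (hγ : IsTransverseFlowLine Φ g γ)
    (hΦ : IsStableArrangement Φ g) {u : V} (hu : IsGeneric Φ u) (h₀ : γ 0 ∈ closedChamber Φ u)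
    {t : ℝ} (ht : 0 ≤ t) :
    ∃ u', Relation.ReflTransGen (ChamberStep Φ g) u u' ∧ γ t ∈ closedChamber Φ u' := by
  let reachable : Set ℝ :=
    γ ⁻¹' ⋃ u' ∈ {u' | Relation.ReflTransGen (ChamberStep Φ g) u u'}, closedChamber Φ u'
  have hmem : ∀ s, s ∈ reachable ↔
      ∃ u', Relation.ReflTransGen (ChamberStep Φ g) u u' ∧ γ s ∈ closedChamber Φ u' := by
    simp [reachable]
  have hsub : Set.Icc 0 t ⊆ reachable := by
    refine IsClosed.Icc_subset_of_forall_mem_nhdsWithin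
      (((isClosed_biUnion_closedChamber _).preimage hγ.continuous).inter isClosed_Icc)
      ((hmem 0).2 ⟨u, .refl, h₀⟩) ?_
    rintro s ⟨hs, -⟩
    obtain ⟨u', hr, hs'⟩ := (hmem s).1 hs
    filter_upwards [hγ.eventually_chamberStep hΦ (hu.of_reflTransGen hr) hs'] with x hx
    exact (hmem x).2 ⟨γ x, hr.tail hx, fun a _ ↦ mul_self_nonneg _⟩
  exact (hmem t).1 (hsub ⟨ht, le_rfl⟩)

end IsTransverseFlowLine

lemma exists_isTransverseFlowLine [FiniteDimensional ℝ V] {ι : Type*} [Fintype ι]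
    (hΦ : IsStableArrangement Φ g) {b : OrthonormalBasis ι ℝ V} {μ : ι → ℝ}
    (hT : ∀ i a, ⟪b i, g a + g.symm a⟫_ℝ = μ i * ⟪b i, a⟫_ℝ) {u : V} (hu : IsGeneric Φ u)
    (E : Submodule ℝ V) :
    ∃ v ∈ closedChamber Φ u, (∀ a ∈ Φ, a ∉ Eᗮ → ⟪E.starProjection v, a⟫_ℝ ≠ 0) ∧
      IsTransverseFlowLine Φ g (fun t ↦ expFlow b μ t v) := by
  borelize V
  let γ : V → ℝ → V := fun v t ↦ expFlow b μ t v
  have hzero : ∀ a ∈ Φ, a ≠ 0 := fun a ha h ↦ hΦ.zero_notMem (h ▸ ha)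
  have hproj : ∀ᵐ v : V, ∀ a ∈ Φ, a ∉ Eᗮ → ⟪E.starProjection v, a⟫_ℝ ≠ 0 := by
    refine (Finset.eventually_all Φ).2 fun a _ ↦ ?_
    by_cases ha : a ∈ Eᗮ
    · exact .of_forall fun _ h ↦ absurd ha h
    filter_upwards [ae_inner_ne_zero fun h ↦ ha ((E.starProjection_apply_eq_zero_iff).1 h)]
      with v hv _
    rwa [Submodule.inner_starProjection_left_eq_right]
  have havoid : ∀ a ∈ Φ, ∀ c, ∀ᵐ v : V, (∀ r : ℝ, c ≠ r • a) →
      ∀ t, ⟪γ v t, a⟫_ℝ = 0 → ⟪γ v t, c⟫_ℝ ≠ 0 := fun a ha c ↦ by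
    by_cases hc : ∀ r : ℝ, c ≠ r • a
    · exact (ae_inner_expFlow_ne_zero b μ (hzero a ha) hc).mono fun _ h _ ↦ h
    · exact .of_forall fun _ h ↦ absurd h hc
  have hopen : IsOpen {v : V | ∀ a ∈ Φ, 0 < ⟪v, a⟫_ℝ * ⟪u, a⟫_ℝ} := by
    simp only [Set.ofPred_forall]
    exact isOpen_biInter_finset fun a _ ↦ isOpen_lt continuous_const (by fun_prop)
  obtain ⟨v, ⟨hvE, hvT, hvΦ⟩, hvu⟩ := (MeasureTheory.Measure.dense_of_ae (hproj.and
    (((Finset.eventually_all Φ).2 fun a ha ↦ havoid a ha (g a + g.symm a)).and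
    ((Finset.eventually_all Φ).2 fun a ha ↦ (Finset.eventually_all Φ).2 fun c _ ↦
      havoid a ha c)))).exists_mem_open hopen ⟨u, fun a ha ↦ mul_self_pos.2 (hu a ha)⟩
  refine ⟨v, fun a ha ↦ (hvu a ha).le, hvE,
    ⟨by unfold expFlow; fun_prop, fun a t ↦ hasDerivAt_inner_expFlow hT t v a,
      fun {a t} ha h₀ ↦ ?_, fun {a c t} ha hc h₀ h₀' ↦ ?_⟩⟩
  · refine hvT a ha (fun r hr ↦ ?_) t h₀
    rw [inner_expFlow_of_eq_smul hT hr] at h₀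
    exact mul_ne_zero (Real.exp_pos _).ne' (left_ne_zero_of_mul (hvu a ha).ne') h₀
  · by_contra! h
    exact hvΦ a ha c hc h t h₀ h₀'

/-- The symmetric operator `g + g⁻¹` of an isometry `g`. -/
noncomputable def addSymm (g : V ≃ₗᵢ[ℝ] V) : V →ₗ[ℝ] V :=
  (g.toLinearEquiv : V →ₗ[ℝ] V) + (g.symm.toLinearEquiv : V →ₗ[ℝ] V)

lemma addSymm_apply (x : V) : addSymm g x = g x + g.symm x := rfl

lemma isSymmetric_addSymm : (addSymm g).IsSymmetric := fun x y ↦ by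
  rw [addSymm_apply, addSymm_apply, inner_add_left, inner_add_right, add_comm,
    inner_map_eq_inner_symm, g.inner_map_eq_flip]

lemma apply_mem_eigenspace_addSymm {l : ℝ} {e : V}
    (he : e ∈ Module.End.eigenspace (addSymm g) l) :
    g e ∈ Module.End.eigenspace (addSymm g) l ∧ g.symm e ∈ Module.End.eigenspace (addSymm g) l := by
  rw [Module.End.mem_eigenspace_iff, addSymm_apply] at he
  simp only [Module.End.mem_eigenspace_iff, addSymm_apply, ← map_smul, ← he, map_add,
    g.apply_symm_apply, g.symm_apply_apply, and_self]

lemma apply_mem_orthogonal_eigenspace_addSymm_iff {l : ℝ} (a : V) :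
    g a ∈ (Module.End.eigenspace (addSymm g) l)ᗮ ↔
      a ∈ (Module.End.eigenspace (addSymm g) l)ᗮ := by
  simp only [Submodule.mem_orthogonal]
  refine ⟨fun h e he ↦ ?_, fun h e he ↦ ?_⟩
  · rw [← g.inner_map_map]
    exact h _ (apply_mem_eigenspace_addSymm he).1
  · rw [inner_map_eq_inner_symm]
    exact h _ (apply_mem_eigenspace_addSymm he).2

/-- The flow of `g + g⁻¹` converges in direction to the top eigenspace, so every generic vector is
connected to a chamber that has an eigenvector in its closure. -/
theorem IsStableArrangement.exists_eigenspace_forall_reflTransGen [FiniteDimensional ℝ V]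
    (hΦ : IsStableArrangement Φ g) (hne : Φ.Nonempty) :
    ∃ l, (∃ a ∈ Φ, a ∉ (Module.End.eigenspace (addSymm g) l)ᗮ) ∧
      ∀ u, IsGeneric Φ u → ∃ u', Relation.ReflTransGen (ChamberStep Φ g) u u' ∧
        ∃ p ∈ Module.End.eigenspace (addSymm g) l,
          ∀ a ∈ Φ, a ∉ (Module.End.eigenspace (addSymm g) l)ᗮ → 0 < ⟪u', a⟫_ℝ * ⟪p, a⟫_ℝ := by
  let b := (isSymmetric_addSymm (g := g)).eigenvectorBasis rfl
  let μ := (isSymmetric_addSymm (g := g)).eigenvalues rfl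
  have hb : ∀ i, addSymm g (b i) = μ i • b i :=
    (isSymmetric_addSymm (g := g)).apply_eigenvectorBasis rfl
  have hT : ∀ i a, ⟪b i, g a + g.symm a⟫_ℝ = μ i * ⟪b i, a⟫_ℝ := fun i a ↦ by
    rw [← addSymm_apply, ← isSymmetric_addSymm, hb, real_inner_smul_left]
  obtain ⟨j, ⟨a₀, ha₀, hja₀⟩, hmax⟩ := exists_max_eigenvalue b μ hΦ.zero_notMem hne
  set E := Module.End.eigenspace (addSymm g) (μ j)
  refine ⟨μ j, ⟨a₀, ha₀, fun h ↦ hja₀ (h _ (Module.End.mem_eigenspace_iff.2 (hb j)))⟩,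
    fun u hu ↦ ?_⟩
  obtain ⟨v, hvu, hvE, hγ⟩ := exists_isTransverseFlowLine hΦ hT hu E
  have hev : ∀ᶠ t in atTop, ∀ a ∈ Φ, a ∉ Eᗮ →
      0 < ⟪expFlow b μ t v, a⟫_ℝ * ⟪E.starProjection v, a⟫_ℝ := by
    refine (Finset.eventually_all Φ).2 fun a ha ↦ ?_
    by_cases haE : a ∈ Eᗮ
    · exact .of_forall fun _ h ↦ absurd haE h
    · exact (eventually_inner_expFlow_mul_pos isSymmetric_addSymm hb (hmax a ha)
        (hvE a ha haE)).mono fun _ h _ ↦ h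
  obtain ⟨t, ht, ht₀⟩ := (hev.and (eventually_ge_atTop 0)).exists
  obtain ⟨u', hr, hu'⟩ := hγ.exists_reflTransGen_mem_closedChamber hΦ hu
    (by rwa [expFlow_zero]) ht₀
  refine ⟨u', hr, E.starProjection v, E.starProjection_apply_mem v, fun a ha haE ↦ ?_⟩
  have hpos := ht a ha haE
  have hu'a := inner_mul_inner_pos_of_mem_closedChamber (hu.of_reflTransGen hr) hu' ha
    (left_ne_zero_of_mul hpos.ne')
  exact mul_pos_of_sign_eq_sign (left_ne_zero_of_mul hu'a.ne')
    ((sign_eq_sign_of_mul_pos hu'a).trans (sign_eq_sign_of_mul_pos hpos))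

end Flow

section Agreement

open Filter Topology
open scoped InnerProductSpace

variable {V : Type*} [NormedAddCommGroup V] [InnerProductSpace ℝ V] {Φ : Finset V}
  {g : V ≃ₗᵢ[ℝ] V}

lemma exists_side_eq_of_perturbation (Φ : Finset V) (p z : V) :
    ∃ x : V, (∀ a ∈ Φ, ⟪p, a⟫_ℝ = 0 → side x a = side z a) ∧
      ∀ a ∈ Φ, ⟪p, a⟫_ℝ ≠ 0 → side x a = side p a := by
  have hev : ∀ᶠ ε in 𝓝[>] (0 : ℝ), ∀ a ∈ Φ, ⟪p, a⟫_ℝ ≠ 0 →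
      0 < ⟪p + ε • z, a⟫_ℝ * ⟪p, a⟫_ℝ := by
    refine (Finset.eventually_all Φ).2 fun a _ ↦ ?_
    by_cases h : ⟪p, a⟫_ℝ = 0
    · exact .of_forall fun _ h' ↦ absurd h h'
    have hcont : ContinuousAt (fun ε : ℝ ↦ ⟪p + ε • z, a⟫_ℝ) 0 := by fun_prop
    filter_upwards [eventually_mul_pos hcont (by simpa using h)] with ε hε _
    simpa using hε
  obtain ⟨ε, hε, hε₀⟩ := (hev.and self_mem_nhdsWithin).exists
  refine ⟨p + ε • z, fun a _ h₀ ↦ ?_, fun a ha h₀ ↦ side_eq_side_of_mul_pos (hε a ha h₀)⟩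
  rw [side, inner_add_left, h₀, zero_add, real_inner_smul_left, sign_mul, sign_pos hε₀, one_mul,
    side]

lemma IsStableArrangement.filter (hΦ : IsStableArrangement Φ g) {P : V → Prop} [DecidablePred P]
    (hP : ∀ a, P (g a) ↔ P a) : IsStableArrangement (Φ.filter P) g where
  map_mem_iff a := by rw [Finset.mem_filter, Finset.mem_filter, hΦ.map_mem_iff, hP]
  eq_or_eq_neg ha hc := hΦ.eq_or_eq_neg (Finset.mem_filter.1 ha).1 (Finset.mem_filter.1 hc).1
  zero_notMem h := hΦ.zero_notMem (Finset.mem_filter.1 h).1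

lemma agreement_filter_add_agreement_filter_not (P : V → Prop) [DecidablePred P] (u : V) :
    agreement (Φ.filter P) g u + agreement (Φ.filter (¬ P ·)) g u = agreement Φ g u :=
  Finset.sum_filter_add_sum_filter_not ..

/-- A path of chambers of the walls through `p` is also a path among the chambers of `Φ` having
`p` in their closure, along which the walls missing `p` contribute a constant agreement. -/
lemma exists_lift_reflTransGen_chamberStep (hΦ : IsStableArrangement Φ g) {P : V → Prop}
    [DecidablePred P] (hP : ∀ a, P (g a) ↔ P a) {p u y : V} (hp : ∀ a ∈ Φ, P a ↔ ⟪p, a⟫_ℝ = 0)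
    (hu : IsGeneric Φ u) (hup : ∀ a ∈ Φ, ¬ P a → side u a = side p a)
    (h : Relation.ReflTransGen (ChamberStep (Φ.filter P) g) u y) :
    ∃ x, Relation.ReflTransGen (ChamberStep Φ g) u x ∧ (∀ a ∈ Φ, P a → side x a = side y a) ∧
      ∀ a ∈ Φ, ¬ P a → side x a = side p a := by
  induction h with
  | refl => exact ⟨u, .refl, fun _ _ _ ↦ rfl, hup⟩
  | @tail y z _ hyz ih =>
    obtain ⟨x, hr, hxy, hxp⟩ := ih
    obtain ⟨x', hx'z, hx'p⟩ := exists_side_eq_of_perturbation Φ p z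
    replace hx'z : ∀ a ∈ Φ, P a → side x' a = side z a := fun a ha h ↦
      hx'z a ha ((hp a ha).1 h)
    replace hx'p : ∀ a ∈ Φ, ¬ P a → side x' a = side p a := fun a ha h ↦
      hx'p a ha (mt (hp a ha).2 h)
    have hgen : IsGeneric Φ x' := fun a ha h₀ ↦ by
      by_cases h : P a
      · exact hyz.right.congr (fun b hb ↦ (hx'z b (Finset.mem_filter.1 hb).1
          (Finset.mem_filter.1 hb).2).symm) a (Finset.mem_filter.2 ⟨ha, h⟩) h₀
      · have := mul_pos_of_side_eq_side (mt (hp a ha).2 h) (hx'p a ha h).symm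
        rw [h₀, mul_zero] at this
        exact this.false
    obtain ⟨a, hwall⟩ := hyz.exists_wall
    refine ⟨x', hr.tail ⟨hu.of_reflTransGen hr, hgen, ⟨a, fun c hc h₁ h₂ ↦ ?_⟩, ?_⟩, hx'z, hx'p⟩
    · by_cases h : P c
      · rw [hxy c hc h, hx'z c hc h, hwall c (Finset.mem_filter.2 ⟨hc, h⟩) h₁ h₂]
      · rw [hxp c hc h, hx'p c hc h]
    · have hfilter : ∀ {Q : V → Prop} [DecidablePred Q] {v w : V},
          (∀ a ∈ Φ, Q a → side v a = side w a) → ∀ a ∈ Φ.filter Q, side v a = side w a :=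
        fun h a ha ↦ h a (Finset.mem_filter.1 ha).1 (Finset.mem_filter.1 ha).2
      have hnot : IsStableArrangement (Φ.filter (¬ P ·)) g := hΦ.filter fun a ↦ not_congr (hP a)
      rw [← agreement_filter_add_agreement_filter_not P,
        ← agreement_filter_add_agreement_filter_not P x',
        (hΦ.filter hP).agreement_congr (hfilter hxy), (hΦ.filter hP).agreement_congr (hfilter hx'z),
        hnot.agreement_congr (hfilter hxp), hnot.agreement_congr (hfilter hx'p)]
      exact add_le_add_left hyz.agreement_le _

/-- Repeatedly flowing to an eigenspace of `g + g⁻¹` and restricting to the walls containing it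
makes the agreement reach one and the same value from every chamber. -/
theorem IsStableArrangement.exists_forall_agreement_eq [FiniteDimensional ℝ V]
    (hΦ : IsStableArrangement Φ g) :
    ∃ m : ℤ, ∀ u, IsGeneric Φ u →
      ∃ u', Relation.ReflTransGen (ChamberStep Φ g) u u' ∧ agreement Φ g u' = m := by
  classical
  induction Φ using Finset.strongInduction with
  | H Φ ih =>
  rcases Φ.eq_empty_or_nonempty with rfl | hne
  · exact ⟨0, fun u _ ↦ ⟨u, .refl, by simp [agreement]⟩⟩
  obtain ⟨l, ⟨a₀, ha₀, ha₀l⟩, hflow⟩ := hΦ.exists_eigenspace_forall_reflTransGen hne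
  set E := Module.End.eigenspace (addSymm g) l
  let P : V → Prop := (· ∈ Eᗮ)
  have hP : ∀ a, P (g a) ↔ P a := apply_mem_orthogonal_eigenspace_addSymm_iff
  have hnot : IsStableArrangement (Φ.filter (¬ P ·)) g := hΦ.filter fun a ↦ not_congr (hP a)
  obtain ⟨m, hm⟩ := ih (Φ.filter P) (Finset.filter_ssubset.2 ⟨a₀, ha₀, ha₀l⟩) (hΦ.filter hP)
  have hterm : ∀ u, IsGeneric Φ u → ∃ u',
      Relation.ReflTransGen (ChamberStep Φ g) u u' ∧ (agreement Φ g u' : ℝ) =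
        m + (Φ.filter (¬ P ·)).card * (1 - 2 * (Real.arccos (l / 2) / Real.pi)) := fun u hu ↦ by
    obtain ⟨v, hr, p, hpE, hvp⟩ := hflow u hu
    have hv := hu.of_reflTransGen hr
    have hp : ∀ a ∈ Φ, P a ↔ ⟪p, a⟫_ℝ = 0 := fun a ha ↦
      ⟨fun h ↦ h p hpE, fun h ↦ by_contra fun h' ↦ right_ne_zero_of_mul (hvp a ha h').ne' h⟩
    obtain ⟨y, hy, hym⟩ := hm v fun a ha ↦ hv a (Finset.mem_filter.1 ha).1
    obtain ⟨x, hx, hxy, hxp⟩ := exists_lift_reflTransGen_chamberStep hΦ hP hp hv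
      (fun a ha h ↦ side_eq_side_of_mul_pos (hvp a ha h)) hy
    refine ⟨x, hr.trans hx, ?_⟩
    rw [← agreement_filter_add_agreement_filter_not P,
      (hΦ.filter hP).agreement_congr fun a ha ↦
        hxy a (Finset.mem_filter.1 ha).1 (Finset.mem_filter.1 ha).2,
      hnot.agreement_congr fun a ha ↦ hxp a (Finset.mem_filter.1 ha).1 (Finset.mem_filter.1 ha).2,
      hym, Int.cast_add, hnot.agreement_eq_of_map_add_symm (Module.End.mem_eigenspace_iff.1 hpE)
        fun a ha ↦ mt (hp a (Finset.mem_filter.1 ha).1).2 (Finset.mem_filter.1 ha).2]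
  by_cases hgen : ∃ u, IsGeneric Φ u
  · obtain ⟨u₀, hu₀⟩ := hgen
    obtain ⟨u₁, -, hu₁⟩ := hterm u₀ hu₀
    refine ⟨agreement Φ g u₁, fun u hu ↦ ?_⟩
    obtain ⟨u', hr, hu'⟩ := hterm u hu
    exact ⟨u', hr, Int.cast_injective (hu'.trans hu₁.symm)⟩
  · exact ⟨0, fun u hu ↦ absurd ⟨u, hu⟩ hgen⟩

end Agreement

section GeometricRepresentation

open Polynomial.Chebyshev Module

variable {B W : Type*} [Group W] {M : CoxeterMatrix B}

/-- The vector of the Tits representation space `B →₀ ℝ` attached to the letter `i`. -/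
noncomputable abbrev simpleRoot (i : B) : B →₀ ℝ := Finsupp.single i 1

/-- The symmetric bilinear form with `titsForm M α_i α_j = -cos (π / M i j)`. Since `π / 0 = 0`,
it takes the value `-1` when `M i j = 0`, which encodes `M i j = ∞`. -/
noncomputable def titsForm (M : CoxeterMatrix B) : (B →₀ ℝ) →ₗ[ℝ] (B →₀ ℝ) →ₗ[ℝ] ℝ :=
  Finsupp.linearCombination ℝ fun i ↦
    Finsupp.linearCombination ℝ fun j ↦ -Real.cos (Real.pi / M i j)

lemma titsForm_simpleRoot (i j : B) :
    titsForm M (simpleRoot i) (simpleRoot j) = -Real.cos (Real.pi / M i j) := by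
  simp [titsForm]

lemma titsForm_simpleRoot_self (i : B) : titsForm M (simpleRoot i) (simpleRoot i) = 1 := by
  simp [titsForm_simpleRoot]

lemma titsForm_comm (v w : B →₀ ℝ) : titsForm M v w = titsForm M w v := by
  suffices titsForm M = (titsForm M).flip from LinearMap.congr_fun₂ this v w
  ext i j
  simp [titsForm, M.symmetric i j]

lemma two_smul_titsForm_simpleRoot (i : B) :
    ((2 : ℝ) • titsForm M (simpleRoot i)) (simpleRoot i) = 2 := by
  simp [titsForm_simpleRoot_self]

/-- The reflection by which `s_i` acts in the Tits representation. -/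
noncomputable def simpleReflection (M : CoxeterMatrix B) (i : B) : (B →₀ ℝ) ≃ₗ[ℝ] (B →₀ ℝ) :=
  Module.reflection (two_smul_titsForm_simpleRoot (M := M) i)

lemma simpleReflection_apply (i : B) (v : B →₀ ℝ) :
    simpleReflection M i v = v - (2 * titsForm M (simpleRoot i) v) • simpleRoot i := by
  simp [simpleReflection, Module.reflection_apply]

lemma simpleReflection_mul_self (i : B) : simpleReflection M i * simpleReflection M i = 1 :=
  LinearEquiv.ext <| Module.involutive_reflection <| two_smul_titsForm_simpleRoot (M := M) i

lemma titsForm_simpleReflection (i : B) (v w : B →₀ ℝ) :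
    titsForm M (simpleReflection M i v) (simpleReflection M i w) = titsForm M v w := by
  simp only [simpleReflection_apply, map_sub, map_smul, LinearMap.sub_apply, LinearMap.smul_apply,
    titsForm_simpleRoot_self, titsForm_comm v (simpleRoot i), smul_eq_mul]
  ring

lemma simpleReflection_combination_left (i j : B) (a b : ℝ) :
    simpleReflection M i (a • simpleRoot i + b • simpleRoot j) =
      (2 * Real.cos (Real.pi / M i j) * b - a) • simpleRoot i + b • simpleRoot j := by
  rw [simpleReflection_apply]
  simp only [map_add, map_smul, titsForm_simpleRoot_self, titsForm_simpleRoot, smul_eq_mul]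
  module

lemma simpleReflection_combination_right (i j : B) (a b : ℝ) :
    simpleReflection M j (a • simpleRoot i + b • simpleRoot j) =
      a • simpleRoot i + (2 * Real.cos (Real.pi / M i j) * a - b) • simpleRoot j := by
  rw [add_comm, simpleReflection_combination_left, M.symmetric j i, add_comm]

lemma eval_U_add_two (x : ℝ) (n : ℤ) :
    (U ℝ (n + 2)).eval x = 2 * x * (U ℝ (n + 1)).eval x - (U ℝ n).eval x := by
  simp [U_add_two]

lemma sin_pi_div_pos {m : ℕ} (hm : 2 ≤ m) : 0 < Real.sin (Real.pi / m) := by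
  have : (2 : ℝ) ≤ m := by exact_mod_cast hm
  refine Real.sin_pos_of_pos_of_lt_pi (by positivity) ?_
  rw [div_lt_iff₀ (by linarith)]
  nlinarith [Real.pi_pos]

lemma eval_U_cos_pi_div_add_two_mul {m : ℕ} (hm : 2 ≤ m) (n : ℤ) :
    (U ℝ (n + 2 * m)).eval (Real.cos (Real.pi / m)) =
      (U ℝ n).eval (Real.cos (Real.pi / m)) := by
  have hm0 : (m : ℝ) ≠ 0 := by positivity
  apply mul_right_cancel₀ (sin_pi_div_pos hm).ne'
  rw [U_real_cos, U_real_cos, ← Real.sin_add_two_pi (((n : ℝ) + 1) * (Real.pi / m))]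
  congr 1
  push_cast
  field_simp
  ring

lemma eval_U_cos_pi_div_nonneg {m k : ℕ} (hm : m ≠ 1) (hk : m ≠ 0 → k ≤ m) :
    0 ≤ (U ℝ ((k : ℤ) - 1)).eval (Real.cos (Real.pi / m)) := by
  obtain rfl | hm0 := eq_or_ne m 0
  · simp [U_eval_one]
  have hsin := sin_pi_div_pos (m := m) (by omega)
  have hkm : (k : ℝ) ≤ m := by exact_mod_cast hk hm0
  refine nonneg_of_mul_nonneg_left ?_ hsin
  rw [U_real_cos]
  push_cast
  rw [sub_add_cancel]
  refine Real.sin_nonneg_of_nonneg_of_le_pi (by positivity) ?_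
  rw [← mul_div_assoc, div_le_iff₀ (by positivity)]
  nlinarith [Real.pi_pos]

lemma simpleReflection_mul_pow_eval_U (i j : B) (n : ℕ) (k : ℤ) :
    ((simpleReflection M i * simpleReflection M j) ^ n)
        ((U ℝ k).eval (Real.cos (Real.pi / M i j)) • simpleRoot i +
          (U ℝ (k - 1)).eval (Real.cos (Real.pi / M i j)) • simpleRoot j) =
      (U ℝ (k + 2 * n)).eval (Real.cos (Real.pi / M i j)) • simpleRoot i +
        (U ℝ (k - 1 + 2 * n)).eval (Real.cos (Real.pi / M i j)) • simpleRoot j := by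
  induction n with
  | zero => simp
  | succ n ih =>
    obtain ⟨l, hl⟩ : ∃ l : ℤ, l = k - 1 + 2 * n := ⟨_, rfl⟩
    rw [pow_succ', LinearEquiv.mul_apply, ih, LinearEquiv.mul_apply, ← hl,
      show k + 2 * (n : ℤ) = l + 1 by omega, simpleReflection_combination_right,
      ← eval_U_add_two, simpleReflection_combination_left,
      show l + 2 = l + 1 + 1 by ring, ← eval_U_add_two,
      show k + 2 * ((n + 1 : ℕ) : ℤ) = l + 1 + 2 by push_cast; omega,
      show k - 1 + 2 * ((n + 1 : ℕ) : ℤ) = l + 1 + 1 by push_cast; omega]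

lemma exists_simpleReflection_mul_pow_apply (i j : B) (n : ℕ) (v : B →₀ ℝ) :
    ∃ a b : ℝ, ((simpleReflection M i * simpleReflection M j) ^ n) v =
      v + a • simpleRoot i + b • simpleRoot j := by
  induction n with
  | zero => exact ⟨0, 0, by simp⟩
  | succ n ih =>
    obtain ⟨a, b, h⟩ := ih
    rw [pow_succ', LinearEquiv.mul_apply, h, LinearEquiv.mul_apply, simpleReflection_apply j,
      simpleReflection_apply i]
    generalize titsForm M (simpleRoot j) _ = x
    generalize titsForm M (simpleRoot i) _ = y
    exact ⟨a - 2 * y, b - 2 * x, by module⟩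

lemma titsForm_simpleReflection_mul_pow (i j : B) (n : ℕ) (v w : B →₀ ℝ) :
    titsForm M (((simpleReflection M i * simpleReflection M j) ^ n) v)
      (((simpleReflection M i * simpleReflection M j) ^ n) w) = titsForm M v w := by
  induction n with
  | zero => simp
  | succ n ih => simp only [pow_succ', LinearEquiv.mul_apply, titsForm_simpleReflection, ih]

lemma eq_zero_of_titsForm_combination_eq_zero {i j : B} (hij : 2 ≤ M i j) {a b : ℝ}
    (hi : titsForm M (simpleRoot i) (a • simpleRoot i + b • simpleRoot j) = 0)
    (hj : titsForm M (simpleRoot j) (a • simpleRoot i + b • simpleRoot j) = 0) :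
    a = 0 ∧ b = 0 := by
  simp only [map_add, map_smul, titsForm_simpleRoot_self, titsForm_simpleRoot, M.symmetric j i,
    smul_eq_mul] at hi hj
  set c := Real.cos (Real.pi / M i j) with hc
  have hsin : Real.sin (Real.pi / M i j) ^ 2 ≠ 0 := pow_ne_zero 2 (sin_pi_div_pos hij).ne'
  have ha : a * Real.sin (Real.pi / M i j) ^ 2 = 0 := by
    rw [Real.sin_sq]
    linear_combination hi + c * hj
  have ha0 := (mul_eq_zero.1 ha).resolve_right hsin
  exact ⟨ha0, by rw [ha0] at hj; linarith⟩

lemma isLiftable_simpleReflection (M : CoxeterMatrix B) : M.IsLiftable (simpleReflection M) := by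
  intro i j
  obtain rfl | hij := eq_or_ne i j
  · rw [M.diagonal, pow_one, simpleReflection_mul_self]
  obtain hm | hm := eq_or_ne (M i j) 0
  · rw [hm, pow_zero]
  have hm2 : 2 ≤ M i j := by have := M.off_diagonal i j hij; omega
  set R := (simpleReflection M i * simpleReflection M j) ^ M i j
  have hRi : R (simpleRoot i) = simpleRoot i := by
    have h := simpleReflection_mul_pow_eval_U (M := M) i j (M i j) 0
    rwa [eval_U_cos_pi_div_add_two_mul hm2, eval_U_cos_pi_div_add_two_mul hm2, U_zero, zero_sub,
      U_neg_one, Polynomial.eval_one, Polynomial.eval_zero, zero_smul, one_smul, add_zero] at h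
  have hRj : R (simpleRoot j) = simpleRoot j := by
    have h := simpleReflection_mul_pow_eval_U (M := M) i j (M i j) (-1)
    rwa [eval_U_cos_pi_div_add_two_mul hm2, eval_U_cos_pi_div_add_two_mul hm2,
      show (-1 - 1 : ℤ) = -2 by rfl, U_neg_one, U_neg_two, Polynomial.eval_neg,
      Polynomial.eval_one, Polynomial.eval_zero, zero_smul, zero_add, neg_one_smul, map_neg,
      neg_inj] at h
  have hform (v w) : titsForm M (R v) (R w) = titsForm M v w :=
    titsForm_simpleReflection_mul_pow i j _ v w
  refine LinearEquiv.ext fun v ↦ ?_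
  obtain ⟨a, b, hv⟩ : ∃ a b : ℝ, R v = v + a • simpleRoot i + b • simpleRoot j :=
    exists_simpleReflection_mul_pow_apply i j _ v
  rw [add_assoc] at hv
  have hi := hform (simpleRoot i) v
  have hj := hform (simpleRoot j) v
  rw [hRi, hv, map_add, add_eq_left] at hi
  rw [hRj, hv, map_add, add_eq_left] at hj
  obtain ⟨rfl, rfl⟩ := eq_zero_of_titsForm_combination_eq_zero hm2 hi hj
  simpa using hv

/-- The Tits representation of `W` on `B →₀ ℝ`. -/
noncomputable def geomRep (cs : CoxeterSystem M W) : W →* ((B →₀ ℝ) ≃ₗ[ℝ] (B →₀ ℝ)) :=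
  cs.lift ⟨simpleReflection M, isLiftable_simpleReflection M⟩

variable (cs : CoxeterSystem M W)

lemma geomRep_simple (i : B) : geomRep cs (cs.simple i) = simpleReflection M i :=
  cs.lift_apply_simple _ i

lemma geomRep_simple_apply (i : B) (v : B →₀ ℝ) :
    geomRep cs (cs.simple i) v = v - (2 * titsForm M (simpleRoot i) v) • simpleRoot i := by
  rw [geomRep_simple, simpleReflection_apply]

lemma geomRep_simple_apply_self (i : B) :
    geomRep cs (cs.simple i) (simpleRoot i) = -simpleRoot i := by
  rw [geomRep_simple_apply, titsForm_simpleRoot_self]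
  module

lemma geomRep_simple_apply_of_ne {i k : B} (hk : k ≠ i) (v : B →₀ ℝ) :
    geomRep cs (cs.simple i) v k = v k := by
  simp [geomRep_simple_apply, hk.symm]

lemma geomRep_mul_apply (x y : W) (v : B →₀ ℝ) :
    geomRep cs (x * y) v = geomRep cs x (geomRep cs y v) := by
  rw [map_mul, LinearEquiv.mul_apply]

lemma geomRep_inv_apply_self (x : W) (v : B →₀ ℝ) :
    geomRep cs x⁻¹ (geomRep cs x v) = v := by
  rw [← geomRep_mul_apply, inv_mul_cancel, map_one, LinearEquiv.coe_one, id]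

lemma geomRep_apply_inv_self (x : W) (v : B →₀ ℝ) :
    geomRep cs x (geomRep cs x⁻¹ v) = v := by
  rw [← geomRep_mul_apply, mul_inv_cancel, map_one, LinearEquiv.coe_one, id]

lemma titsForm_geomRep (x : W) (v w : B →₀ ℝ) :
    titsForm M (geomRep cs x v) (geomRep cs x w) = titsForm M v w := by
  induction x using cs.simple_induction_left generalizing v w with
  | one => simp
  | mul_simple_left x i ih =>
    rw [geomRep_mul_apply, geomRep_mul_apply, geomRep_simple, titsForm_simpleReflection, ih]

lemma geomRep_alternatingWord_apply (i j : B) (k : ℕ) :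
    geomRep cs (cs.wordProd (alternatingWord i j k)) (simpleRoot i) =
      if Even k then
        (U ℝ k).eval (Real.cos (Real.pi / M i j)) • simpleRoot i +
          (U ℝ (k - 1)).eval (Real.cos (Real.pi / M i j)) • simpleRoot j
      else
        (U ℝ (k - 1)).eval (Real.cos (Real.pi / M i j)) • simpleRoot i +
          (U ℝ k).eval (Real.cos (Real.pi / M i j)) • simpleRoot j := by
  induction k with
  | zero => simp [alternatingWord]
  | succ k ih =>
    obtain ⟨l, hl⟩ : ∃ l : ℤ, (k : ℤ) = l + 1 := ⟨k - 1, by ring⟩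
    rw [alternatingWord_succ', cs.wordProd_cons, geomRep_mul_apply, ih, geomRep_simple,
      Nat.cast_succ, hl, add_sub_cancel_right, add_sub_cancel_right]
    by_cases hk : Even k
    · rw [if_pos hk, if_pos hk, if_neg (by simpa [Nat.even_add_one] using hk),
        simpleReflection_combination_right, ← eval_U_add_two]
      ring_nf
    · rw [if_neg hk, if_neg hk, if_pos (by simpa [Nat.even_add_one] using hk),
        simpleReflection_combination_left, ← eval_U_add_two]
      ring_nf

lemma exists_geomRep_alternatingWord_apply {i j : B} (hij : i ≠ j) {k : ℕ}
    (hk : M i j ≠ 0 → k < M i j) :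
    ∃ a b : ℝ, 0 ≤ a ∧ 0 ≤ b ∧ geomRep cs (cs.wordProd (alternatingWord i j k)) (simpleRoot i) =
      a • simpleRoot i + b • simpleRoot j := by
  have hm := M.off_diagonal i j hij
  have hU := eval_U_cos_pi_div_nonneg hm fun h ↦ (hk h).le
  have hU' := eval_U_cos_pi_div_nonneg (k := k + 1) hm hk
  rw [Nat.cast_succ, add_sub_cancel_right] at hU'
  rw [geomRep_alternatingWord_apply]
  split_ifs
  · exact ⟨_, _, hU', hU, rfl⟩
  · exact ⟨_, _, hU, hU', rfl⟩

lemma exists_eq_mul_wordProd_alternatingWord (w : W) (i j : B)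
    (hi : cs.length w < cs.length (w * cs.simple i)) :
    ∃ v k, w = v * cs.wordProd (alternatingWord i j k) ∧ cs.length w = cs.length v + k ∧
      cs.length v < cs.length (v * cs.simple i) ∧ cs.length v < cs.length (v * cs.simple j) := by
  induction hn : cs.length w using Nat.strong_induction_on generalizing w i j with
  | _ n ih =>
  subst hn
  by_cases hj : cs.length w < cs.length (w * cs.simple j)
  · exact ⟨w, 0, by simp [alternatingWord], rfl, hi, hj⟩
  have hlen : cs.length (w * cs.simple j) + 1 = cs.length w := by
    have := cs.length_mul_simple w j
    omega
  obtain ⟨v, k, hw, hk, hvj, hvi⟩ := ih _ (by omega) (w * cs.simple j) j i (by simp; omega) rfl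
  refine ⟨v, k + 1, ?_, by omega, hvi, hvj⟩
  rw [alternatingWord_succ, cs.wordProd_concat, ← mul_assoc, ← hw,
    cs.simple_mul_simple_cancel_right]

lemma lt_of_length_mul_wordProd_alternatingWord {v : W} {i j : B} {k : ℕ}
    (hlen : cs.length (v * cs.wordProd (alternatingWord i j k)) = cs.length v + k)
    (hi : cs.length (v * cs.wordProd (alternatingWord i j k)) <
      cs.length (v * cs.wordProd (alternatingWord i j k) * cs.simple i)) (hm : M i j ≠ 0) :
    k < M i j := by
  by_contra! hk
  refine cs.not_isReduced_alternatingWord j i (m := k + 1) (by rwa [M.symmetric])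
    (by rw [M.symmetric]; omega) ?_
  rw [mul_assoc, ← cs.wordProd_concat, ← alternatingWord_succ] at hi
  have hle := cs.length_mul_le v (cs.wordProd (alternatingWord j i (k + 1)))
  have hle' := cs.length_wordProd_le (alternatingWord j i (k + 1))
  rw [length_alternatingWord] at hle'
  rw [CoxeterSystem.IsReduced, length_alternatingWord]
  omega

theorem geomRep_simpleRoot_nonneg (w : W) (i : B)
    (hi : cs.length w < cs.length (w * cs.simple i)) : 0 ≤ geomRep cs w (simpleRoot i) := by
  induction hn : cs.length w using Nat.strong_induction_on generalizing w i with
  | _ n ih =>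
  subst hn
  obtain rfl | hw := eq_or_ne w 1
  · simp
  obtain ⟨j, hj⟩ := cs.exists_rightDescent_of_ne_one hw
  rw [CoxeterSystem.IsRightDescent] at hj
  have hij : i ≠ j := by rintro rfl; omega
  obtain ⟨v, k, rfl, hk, hvi, hvj⟩ := exists_eq_mul_wordProd_alternatingWord cs w i j hi
  have hk0 : k ≠ 0 := by
    rintro rfl
    simp only [alternatingWord, cs.wordProd_nil, mul_one] at hj
    omega
  obtain ⟨a, b, ha, hb, hab⟩ := exists_geomRep_alternatingWord_apply cs hij
    (lt_of_length_mul_wordProd_alternatingWord cs hk hi)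
  rw [geomRep_mul_apply, hab, map_add, map_smul, map_smul]
  exact add_nonneg (smul_nonneg ha (ih _ (by omega) v i hvi rfl))
    (smul_nonneg hb (ih _ (by omega) v j hvj rfl))

/-- A root is a vector of the form `w α_i`. -/
def IsRoot (v : B →₀ ℝ) : Prop := ∃ w i, geomRep cs w (simpleRoot i) = v

lemma isRoot_geomRep_simpleRoot (w : W) (i : B) : IsRoot cs (geomRep cs w (simpleRoot i)) :=
  ⟨w, i, rfl⟩

lemma geomRep_simpleRoot_nonpos (w : W) (i : B)
    (hi : cs.length (w * cs.simple i) < cs.length w) : geomRep cs w (simpleRoot i) ≤ 0 := by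
  have h := geomRep_simpleRoot_nonneg cs (w * cs.simple i) i (by simpa using hi)
  rwa [geomRep_mul_apply, geomRep_simple_apply_self, map_neg, Left.nonneg_neg_iff] at h

variable {cs}

lemma IsRoot.geomRep {v : B →₀ ℝ} (hv : IsRoot cs v) (w : W) : IsRoot cs (geomRep cs w v) := by
  obtain ⟨x, i, rfl⟩ := hv
  exact ⟨w * x, i, geomRep_mul_apply ..⟩

lemma IsRoot.titsForm_self {v : B →₀ ℝ} (hv : IsRoot cs v) : titsForm M v v = 1 := by
  obtain ⟨x, i, rfl⟩ := hv
  rw [titsForm_geomRep, titsForm_simpleRoot_self]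

lemma IsRoot.ne_zero {v : B →₀ ℝ} (hv : IsRoot cs v) : v ≠ 0 := by
  rintro rfl
  simpa using hv.titsForm_self

lemma IsRoot.nonneg_or_nonpos {v : B →₀ ℝ} (hv : IsRoot cs v) : 0 ≤ v ∨ v ≤ 0 := by
  obtain ⟨w, i, rfl⟩ := hv
  obtain h | h := cs.length_mul_simple w i
  · exact Or.inl (geomRep_simpleRoot_nonneg cs w i (by omega))
  · exact Or.inr (geomRep_simpleRoot_nonpos cs w i (by omega))

lemma IsRoot.nonneg_of_pos {v : B →₀ ℝ} (hv : IsRoot cs v) {k : B} (hk : 0 < v k) : 0 ≤ v :=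
  hv.nonneg_or_nonpos.resolve_right fun h ↦ hk.not_ge (h k)

lemma IsRoot.eq_simpleRoot_of_eq_smul {i : B} {c : ℝ} (hv : IsRoot cs (c • simpleRoot i))
    (hc : 0 ≤ c) : c • simpleRoot i = simpleRoot i := by
  have h := hv.titsForm_self
  simp only [map_smul, LinearMap.smul_apply, titsForm_simpleRoot_self, smul_eq_mul, mul_one] at h
  rw [show c = 1 by nlinarith, one_smul]

lemma IsRoot.geomRep_simple_nonneg {v : B →₀ ℝ} (hv : IsRoot cs v) {i : B} (hpos : 0 ≤ v)
    (hne : v ≠ simpleRoot i) : 0 ≤ PartialConjugation.geomRep cs (cs.simple i) v := by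
  obtain ⟨k, hki, hk⟩ : ∃ k, k ≠ i ∧ v k ≠ 0 := by
    by_contra! h
    have hvi : v = v i • simpleRoot i := by
      ext k
      obtain rfl | hk := eq_or_ne k i
      · simp
      · simp [h k hk, hk.symm]
    rw [hvi] at hv hne
    exact hne (hv.eq_simpleRoot_of_eq_smul (hpos i))
  refine (hv.geomRep _).nonneg_of_pos (k := k) ?_
  rw [geomRep_simple_apply_of_ne cs hki]
  exact lt_of_le_of_ne (hpos k) hk.symm

variable (cs)

lemma geomRep_simpleRoot_nonneg_iff {w : W} {i : B} :
    0 ≤ geomRep cs w (simpleRoot i) ↔ cs.length w < cs.length (w * cs.simple i) := by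
  refine ⟨fun h ↦ ?_, geomRep_simpleRoot_nonneg cs w i⟩
  by_contra hlt
  have hle := geomRep_simpleRoot_nonpos cs w i (by have := cs.length_mul_simple w i; omega)
  exact (isRoot_geomRep_simpleRoot cs w i).ne_zero (le_antisymm hle h)

lemma eq_one_of_geomRep_simpleRoot_nonneg {w : W}
    (hw : ∀ i, 0 ≤ geomRep cs w (simpleRoot i)) : w = 1 := by
  by_contra hne
  obtain ⟨i, hi⟩ := cs.exists_rightDescent_of_ne_one hne
  exact lt_asymm hi ((geomRep_simpleRoot_nonneg_iff cs).1 (hw i))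

lemma geomRep_injective : Function.Injective (geomRep cs) := by
  refine (injective_iff_map_eq_one _).2 fun w hw ↦ eq_one_of_geomRep_simpleRoot_nonneg cs fun i ↦ ?_
  simp [hw]

lemma mul_simple_eq_of_geomRep_simpleRoot_eq {w : W} {i j : B}
    (h : geomRep cs w (simpleRoot j) = simpleRoot i) :
    w * cs.simple j = cs.simple i * w := by
  refine geomRep_injective cs (LinearEquiv.ext fun v ↦ ?_)
  rw [geomRep_mul_apply, geomRep_mul_apply, geomRep_simple_apply, geomRep_simple_apply, map_sub,
    map_smul, h, ← titsForm_geomRep cs w (simpleRoot j), h]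

lemma dvd_of_eval_U_cos_pi_div {m n : ℕ} (h₁ : (U ℝ (2 * n)).eval (Real.cos (Real.pi / m)) = 1)
    (h₀ : (U ℝ (2 * n - 1)).eval (Real.cos (Real.pi / m)) = 0) : m ∣ n := by
  obtain rfl | hm := eq_or_ne m 0
  · simpa [U_eval_one] using h₀
  have hcos : Real.cos ((2 * n : ℤ) * (Real.pi / m)) = 1 := by
    rw [← T_real_cos, T_eq_U_sub_X_mul_U]
    simp [h₁, h₀]
  obtain ⟨k, hk⟩ := (Real.cos_eq_one_iff _).1 hcos
  have hm' : (m : ℝ) ≠ 0 := Nat.cast_ne_zero.2 hm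
  have hkm : (n : ℝ) = m * k := by
    push_cast at hk
    field_simp at hk
    linarith
  exact Int.natCast_dvd_natCast.1 ⟨k, by exact_mod_cast hkm⟩

theorem orderOf_simple_mul_simple (i j : B) : orderOf (cs.simple i * cs.simple j) = M i j := by
  obtain rfl | hij := eq_or_ne i j
  · simp
  refine Nat.dvd_antisymm (orderOf_dvd_of_pow_eq_one (cs.simple_mul_simple_pow i j)) ?_
  set n := orderOf (cs.simple i * cs.simple j)
  have hone : (simpleReflection M i * simpleReflection M j) ^ n = 1 := by
    rw [← geomRep_simple cs, ← geomRep_simple cs, ← map_mul, ← map_pow, pow_orderOf_eq_one, map_one]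
  have h := simpleReflection_mul_pow_eval_U (M := M) i j n 0
  rw [hone] at h
  refine dvd_of_eval_U_cos_pi_div ?_ ?_
  · simpa [hij.symm] using (DFunLike.congr_fun h i).symm
  · simpa [hij, sub_eq_neg_add] using (DFunLike.congr_fun h j).symm

end GeometricRepresentation

section Parabolic

variable {B W : Type*} [Group W] {M : CoxeterMatrix B} {cs : CoxeterSystem M W} {K : Set B}

lemma simple_mem_parab {i : B} (hi : i ∈ K) : cs.simple i ∈ parab cs K :=
  Subgroup.subset_closure ⟨i, hi, rfl⟩

lemma geomRep_apply_of_notMem {u : W} (hu : u ∈ parab cs K) (v : B →₀ ℝ) {k : B} (hk : k ∉ K) :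
    geomRep cs u v k = v k := by
  induction hu using Subgroup.closure_induction generalizing v with
  | mem x hx =>
    obtain ⟨i, hi, rfl⟩ := hx
    exact geomRep_simple_apply_of_ne cs (by rintro rfl; exact hk hi) v
  | one => simp
  | mul x y _ _ hx hy => rw [geomRep_mul_apply, hx, hy]
  | inv x _ hx => rw [← hx, geomRep_apply_inv_self]

lemma mem_of_length_mul_simple_lt {u : W} (hu : u ∈ parab cs K) {i : B}
    (hi : cs.length (u * cs.simple i) < cs.length u) : i ∈ K := by
  by_contra hiK
  refine lt_asymm hi ((geomRep_simpleRoot_nonneg_iff cs).1 ?_)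
  refine (isRoot_geomRep_simpleRoot cs u i).nonneg_of_pos (k := i) ?_
  rw [geomRep_apply_of_notMem hu _ hiK]
  simp

theorem parab_induction_right {P : W → Prop} (one : P 1)
    (mul_simple : ∀ u ∈ parab cs K, ∀ i ∈ K, cs.length (u * cs.simple i) = cs.length u + 1 →
      P u → P (u * cs.simple i)) {u : W} (hu : u ∈ parab cs K) : P u := by
  induction hn : cs.length u using Nat.strong_induction_on generalizing u with
  | _ n ih =>
  subst hn
  obtain rfl | hne := eq_or_ne u 1
  · exact one
  obtain ⟨i, hi⟩ := cs.exists_rightDescent_of_ne_one hne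
  rw [CoxeterSystem.IsRightDescent] at hi
  have hiK := mem_of_length_mul_simple_lt hu hi
  have hui := mul_mem hu (simple_mem_parab hiK)
  have hlen := cs.length_mul_simple u i
  simpa using mul_simple _ hui i hiK (by simp; omega) (ih _ hi hui rfl)

theorem parab_induction_left {P : W → Prop} (one : P 1)
    (simple_mul : ∀ u ∈ parab cs K, ∀ i ∈ K, cs.length (cs.simple i * u) = cs.length u + 1 →
      P u → P (cs.simple i * u)) {u : W} (hu : u ∈ parab cs K) : P u := by
  rw [← inv_inv u]
  refine parab_induction_right (P := fun x ↦ P x⁻¹) (by simpa using one)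
    (fun x hx i hi hlen hP ↦ ?_) (inv_mem hu)
  rw [mul_inv_rev, cs.inv_simple]
  refine simple_mul _ (inv_mem hx) i hi ?_ hP
  rw [← cs.length_inv, mul_inv_rev, cs.inv_simple, inv_inv, hlen, cs.length_inv]

lemma geomRep_nonneg_of_mem_supported {a : W} (ha : ∀ i ∈ K, 0 ≤ geomRep cs a (simpleRoot i))
    {v : B →₀ ℝ} (hvK : v ∈ Finsupp.supported ℝ ℝ K) (hv : 0 ≤ v) : 0 ≤ geomRep cs a v := by
  rw [← Finsupp.sum_single v, Finsupp.sum, map_sum]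
  refine Finset.sum_nonneg fun k hk ↦ ?_
  rw [← mul_one (v k), ← smul_eq_mul, ← Finsupp.smul_single, map_smul]
  exact smul_nonneg (hv k) (ha k (hvK hk))

lemma geomRep_mem_supported {u : W} (hu : u ∈ parab cs K) {v : B →₀ ℝ}
    (hv : v ∈ Finsupp.supported ℝ ℝ K) : geomRep cs u v ∈ Finsupp.supported ℝ ℝ K := by
  rw [Finsupp.mem_supported'] at hv ⊢
  intro k hk
  rw [geomRep_apply_of_notMem hu v hk, hv k hk]

lemma simpleRoot_mem_supported {i : B} (hi : i ∈ K) : simpleRoot i ∈ Finsupp.supported ℝ ℝ K :=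
  Finsupp.single_mem_supported ℝ 1 hi

lemma length_mul_of_geomRep_nonneg {a u : W} (ha : ∀ i ∈ K, 0 ≤ geomRep cs a (simpleRoot i))
    (hu : u ∈ parab cs K) : cs.length (a * u) = cs.length a + cs.length u := by
  refine parab_induction_right (P := fun u ↦ cs.length (a * u) = cs.length a + cs.length u)
    (by simp) (fun u hu i hi hlen ih ↦ ?_) hu
  have hpos : 0 ≤ geomRep cs (a * u) (simpleRoot i) := by
    rw [geomRep_mul_apply]
    refine geomRep_nonneg_of_mem_supported ha
      (geomRep_mem_supported hu (simpleRoot_mem_supported hi)) ?_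
    rw [geomRep_simpleRoot_nonneg_iff]
    omega
  rw [geomRep_simpleRoot_nonneg_iff] at hpos
  have := cs.length_mul_simple (a * u) i
  rw [← mul_assoc]
  omega

lemma isMinRep_iff {a : W} :
    IsMinRep cs K a ↔ ∀ i ∈ K, 0 ≤ geomRep cs a (simpleRoot i) := by
  refine ⟨fun h i hi ↦ ?_, fun h u hu ↦ ?_⟩
  · rw [geomRep_simpleRoot_nonneg_iff]
    have := h _ (simple_mem_parab hi)
    have := cs.length_mul_simple a i
    omega
  · rw [length_mul_of_geomRep_nonneg h hu]
    exact Nat.le_add_right _ _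

lemma not_isMinRep_iff {a : W} :
    ¬ IsMinRep cs K a ↔ ∃ i ∈ K, cs.length (a * cs.simple i) < cs.length a := by
  rw [isMinRep_iff]
  push Not
  refine exists_congr fun i ↦ and_congr_right fun _ ↦ ?_
  rw [geomRep_simpleRoot_nonneg_iff]
  have := cs.length_mul_simple a i
  omega

lemma IsMinRep.length_mul {a u : W} (ha : IsMinRep cs K a) (hu : u ∈ parab cs K) :
    cs.length (a * u) = cs.length a + cs.length u :=
  length_mul_of_geomRep_nonneg (isMinRep_iff.1 ha) hu

variable (K) in
lemma exists_isMinRep_mul_eq (v : W) : ∃ a u, IsMinRep cs K a ∧ u ∈ parab cs K ∧ a * u = v := by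
  induction hn : cs.length v using Nat.strong_induction_on generalizing v with
  | _ n ih =>
  subst hn
  by_cases h : IsMinRep cs K v
  · exact ⟨v, 1, h, one_mem _, mul_one v⟩
  obtain ⟨i, hi, hlt⟩ := not_isMinRep_iff.1 h
  obtain ⟨a, u, ha, hu, e⟩ := ih _ hlt (v * cs.simple i) rfl
  exact ⟨a, u * cs.simple i, ha, mul_mem hu (simple_mem_parab hi), by simp [← mul_assoc, e]⟩

theorem IsMinRep.simple_mul {a : W} (ha : IsMinRep cs K a) (i : B) :
    IsMinRep cs K (cs.simple i * a) ∨ ∃ j ∈ K, cs.simple i * a = a * cs.simple j := by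
  by_cases! h : ∃ j ∈ K, geomRep cs a (simpleRoot j) = simpleRoot i
  · obtain ⟨j, hj, h⟩ := h
    exact Or.inr ⟨j, hj, (mul_simple_eq_of_geomRep_simpleRoot_eq cs h).symm⟩
  · rw [isMinRep_iff] at ha ⊢
    refine Or.inl fun j hj ↦ ?_
    rw [geomRep_mul_apply]
    exact (isRoot_geomRep_simpleRoot cs a j).geomRep_simple_nonneg (ha j hj) (h j hj)

theorem IsMinRep.eq_and_eq_of_mul_eq_mul {a a' u u' : W} (ha : IsMinRep cs K a)
    (ha' : IsMinRep cs K a') (hu : u ∈ parab cs K) (hu' : u' ∈ parab cs K)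
    (h : a * u = a' * u') : a = a' ∧ u = u' := by
  have hmem : u * u'⁻¹ ∈ parab cs K := mul_mem hu (inv_mem hu')
  have h1 : a' = a * (u * u'⁻¹) := by rw [← mul_assoc, h, mul_inv_cancel_right]
  have h2 : a = a' * (u * u'⁻¹)⁻¹ := by rw [h1, mul_inv_cancel_right]
  have hl1 := ha.length_mul hmem
  have hl2 := ha'.length_mul (inv_mem hmem)
  rw [← h1] at hl1
  rw [← h2] at hl2
  have hone : u * u'⁻¹ = 1 := cs.length_eq_zero_iff.1 (by omega)
  exact ⟨by rw [h1, hone, mul_one], mul_inv_eq_one.1 hone⟩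

lemma parab_mono {L : Set B} (h : K ⊆ L) : parab cs K ≤ parab cs L :=
  Subgroup.closure_mono (Set.image_mono h)

lemma mem_of_length_simple_mul_lt {u : W} (hu : u ∈ parab cs K) {i : B}
    (hi : cs.length (cs.simple i * u) < cs.length u) : i ∈ K := by
  refine mem_of_length_mul_simple_lt (inv_mem hu) ?_
  rwa [cs.length_inv, ← cs.length_inv, mul_inv_rev, inv_inv, cs.inv_simple]

lemma mem_parab_sInter {𝓚 : Set (Set B)} {u : W} (hu : ∀ K ∈ 𝓚, u ∈ parab cs K) :
    u ∈ parab cs (⋂₀ 𝓚) := by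
  induction hn : cs.length u using Nat.strong_induction_on generalizing u with
  | _ n ih =>
  subst hn
  obtain rfl | hne := eq_or_ne u 1
  · exact one_mem _
  obtain ⟨i, hi⟩ := cs.exists_rightDescent_of_ne_one hne
  have hmem : ∀ K ∈ 𝓚, i ∈ K := fun K hK ↦ mem_of_length_mul_simple_lt (hu K hK) hi
  have := ih _ hi (fun K hK ↦ mul_mem (hu K hK) (simple_mem_parab (hmem K hK))) rfl
  simpa using mul_mem this (simple_mem_parab hmem)

variable (cs) in
/-- The support of `u`: the smallest set of letters `K` with `u ∈ W_K`. -/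
def support (u : W) : Set B := ⋂₀ {K | u ∈ parab cs K}

lemma mem_parab_support (u : W) : u ∈ parab cs (support cs u) :=
  mem_parab_sInter fun _ h ↦ h

lemma support_subset_iff {u : W} : support cs u ⊆ K ↔ u ∈ parab cs K :=
  ⟨fun h ↦ parab_mono h (mem_parab_support u), fun h ↦ Set.sInter_subset_of_mem h⟩

lemma simple_injective : Function.Injective cs.simple := by
  intro i j h
  refine mem_of_length_mul_simple_lt (K := {j}) (simple_mem_parab (cs := cs) rfl) ?_
  simp [h]

end Parabolic

section FlowToSpecial

variable {B W : Type*} [Group W] {M : CoxeterMatrix B} {cs : CoxeterSystem M W} {J J' : Set B}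
  {δ : parab cs J ≃* parab cs J'} {d : B → B}

variable (cs J J' δ) in
/-- `d` describes the effect of `δ` on the simple reflections: `δ(s_j) = s_{d j}` for `j ∈ J`.
The values of `d` outside `J` are irrelevant. -/
def IsLetterMap (d : B → B) : Prop :=
  ∀ j, ∀ hj : j ∈ J, (δ (sJ cs J j hj) : W) = cs.simple (d j)

lemma MapsSimples.exists_isLetterMap (hδ : MapsSimples cs J J' δ) :
    ∃ d, IsLetterMap cs J J' δ d := by
  classical
  choose f _ hf using hδ.1
  exact ⟨fun j ↦ if h : j ∈ J then f j h else j, fun j hj ↦ by simp only [hj, dif_pos, hf j hj]⟩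

lemma IsLetterMap.injOn (hd : IsLetterMap cs J J' δ d) : J.InjOn d := by
  intro i hi j hj h
  have hδ : δ (sJ cs J i hi) = δ (sJ cs J j hj) := Subtype.ext (by rw [hd i hi, hd j hj, h])
  exact simple_injective (congrArg Subtype.val (δ.injective hδ))

lemma IsLetterMap.map_sJ_mul (hd : IsLetterMap cs J J' δ d) {i : B} (hi : i ∈ J)
    (u : parab cs J) : (δ (sJ cs J i hi * u) : W) = cs.simple (d i) * δ u := by
  rw [map_mul, Subgroup.coe_mul, hd i hi]

lemma IsLetterMap.length_map_le (hd : IsLetterMap cs J J' δ d) (u : parab cs J) :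
    cs.length (δ u : W) ≤ cs.length (u : W) := by
  obtain ⟨u, hu⟩ := u
  refine parab_induction_left (P := fun u ↦ ∀ hu : u ∈ parab cs J,
    cs.length (δ ⟨u, hu⟩ : W) ≤ cs.length u) (fun h ↦ ?_) (fun u hu i hi hlen ih h ↦ ?_) hu hu
  · rw [show (⟨1, h⟩ : parab cs J) = 1 from rfl, map_one, Subgroup.coe_one]
  · rw [show (⟨cs.simple i * u, h⟩ : parab cs J) = sJ cs J i hi * ⟨u, hu⟩ from rfl,
      hd.map_sJ_mul, hlen]
    have := cs.length_mul_le (cs.simple (d i)) (δ ⟨u, hu⟩ : W)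
    rw [cs.length_simple] at this
    have := ih hu
    omega

lemma IsLetterMap.stepRel (hd : IsLetterMap cs J J' δ d) {v v' : W} {i : B} (hi : i ∈ J)
    (h : v' = cs.simple (d i) * v * cs.simple i) (hlen : cs.length v' ≤ cs.length v) :
    StepRel cs J J' δ v v' :=
  ⟨i, hi, by rw [hd i hi, h], hlen⟩

variable (cs d) in
/-- The letters that can be moved through `a` onto a letter of `L`: those `i` with
`s_{d i} a = a s_j` for some `j ∈ L`. A `w`-special set is a set `K` with
`K ⊆ movable cs d w K`. -/
def movable (a : W) (L : Set B) : Set B := {i | ∃ j ∈ L, cs.simple (d i) * a = a * cs.simple j}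

lemma movable_mono (a : W) {L L' : Set B} (h : L ⊆ L') : movable cs d a L ⊆ movable cs d a L' :=
  fun _ ⟨j, hj, e⟩ ↦ ⟨j, h hj, e⟩

lemma exists_inverse_of_finite {K : Set B} (hK : K.Finite) {R : B → B → Prop}
    (hR : ∀ i ∈ K, ∃ j ∈ K, R i j) (hinj : ∀ i ∈ K, ∀ i' ∈ K, ∀ j, R i j → R i' j → i = i') :
    ∀ j ∈ K, ∃ i ∈ K, R i j := by
  choose! f hf hRf using hR
  have hinj' : K.InjOn f := fun i hi i' hi' h ↦
    hinj i hi i' hi' _ (hRf i hi) (h ▸ hRf i' hi')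
  intro j hj
  obtain ⟨i, hi, rfl⟩ := (hK.injOn_iff_bijOn_of_mapsTo hf).1 hinj' |>.surjOn hj
  exact ⟨i, hi, hRf i hi⟩

lemma WSpecial.subset_movable (hd : IsLetterMap cs J J' δ d) (hJ : J.Finite) {a : W} {K : Set B}
    (h : WSpecial cs J J' δ a K) : K ⊆ movable cs d a K := by
  refine exists_inverse_of_finite (hJ.subset h.1)
    (R := fun j i ↦ cs.simple (d i) * a = a * cs.simple j) (fun k hk ↦ ?_)
    fun i _ i' _ j hi hi' ↦ simple_injective (mul_left_cancel (hi.symm.trans hi'))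
  obtain ⟨j, hjJ, hj, e⟩ := h.2 k hk
  exact ⟨j, hj, by rw [← hd j hjJ, ← e, inv_mul_cancel_right]⟩

lemma wSpecial_of_subset_movable (hd : IsLetterMap cs J J' δ d) (hJ : J.Finite) {a : W} {K : Set B}
    (hKJ : K ⊆ J) (hK : K ⊆ movable cs d a K) : WSpecial cs J J' δ a K := by
  refine ⟨hKJ, fun k hk ↦ ?_⟩
  obtain ⟨i, hi, e⟩ := exists_inverse_of_finite (hJ.subset hKJ) hK
    (fun i hi i' hi' j h h' ↦ hd.injOn (hKJ hi) (hKJ hi')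
      (simple_injective (mul_right_cancel (h.trans h'.symm)))) k hk
  exact ⟨i, hKJ hi, hi, by rw [hd i (hKJ hi), ← e, mul_inv_cancel_right]⟩

variable (J J' δ) in
lemma wSpecial_Iset (a : W) : WSpecial cs J J' δ a (Iset cs J J' δ a) := by
  refine ⟨Set.sUnion_subset fun K hK ↦ hK.1, ?_⟩
  rintro k ⟨K, hK, hk⟩
  obtain ⟨j, hj, hjK, e⟩ := hK.2 k hk
  exact ⟨j, hj, ⟨K, hK, hjK⟩, e⟩

lemma Iset_subset (a : W) : Iset cs J J' δ a ⊆ J := (wSpecial_Iset J J' δ a).1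

lemma IsLetterMap.Iset_subset_movable (hd : IsLetterMap cs J J' δ d) (hJ : J.Finite) (a : W) :
    Iset cs J J' δ a ⊆ movable cs d a (Iset cs J J' δ a) :=
  (wSpecial_Iset J J' δ a).subset_movable hd hJ

lemma IsLetterMap.subset_Iset (hd : IsLetterMap cs J J' δ d) (hJ : J.Finite) {a : W} {K : Set B}
    (hKJ : K ⊆ J) (hK : K ⊆ movable cs d a K) : K ⊆ Iset cs J J' δ a :=
  Set.subset_sUnion_of_mem (wSpecial_of_subset_movable hd hJ hKJ hK)

/-- `b` is a candidate for the `W_J`-component of an element reachable from `v` in the coset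
`a W_J`: among all `a' b'` with `a' ∈ W^J`, `b' ∈ W_J` and `v → a' b'`, the pair `(a, b)` is one
minimizing `ℓ(b')`. -/
structure IsMinReachable (cs : CoxeterSystem M W) (J J' : Set B) (δ : parab cs J ≃* parab cs J')
    (v a b : W) : Prop where
  isMinRep : IsMinRep cs J a
  mem : b ∈ parab cs J
  toRel : ToRel cs J J' δ v (a * b)
  length_le : ∀ a' b', IsMinRep cs J a' → b' ∈ parab cs J → ToRel cs J J' δ v (a' * b') →
    cs.length b ≤ cs.length b'

variable (J J' δ) in
lemma exists_isMinReachable (v : W) : ∃ a b, IsMinReachable cs J J' δ v a b := by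
  obtain ⟨a, b, ha, hb, e⟩ := exists_isMinRep_mul_eq (cs := cs) J v
  let S : Set (W × W) :=
    {p | IsMinRep cs J p.1 ∧ p.2 ∈ parab cs J ∧ ToRel cs J J' δ v (p.1 * p.2)}
  have hS : S.Nonempty := ⟨(a, b), ha, hb, e ▸ .refl⟩
  obtain ⟨⟨a, b⟩, ⟨ha, hb, h⟩, hmin⟩ := exists_minimalFor_of_wellFoundedLT (· ∈ S)
    (fun p ↦ cs.length p.2) hS
  refine ⟨a, b, ha, hb, h, fun a' b' ha' hb' h' ↦ ?_⟩
  by_contra! hlt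
  exact absurd (hmin (j := (a', b')) ⟨ha', hb', h'⟩ hlt.le) (not_le.2 hlt)

lemma IsMinReachable.exists_rotate (hd : IsLetterMap cs J J' δ d) {v a b : W} {i : B}
    (h : IsMinReachable cs J J' δ v a (b * cs.simple i)) (hi : i ∈ J)
    (hlen : cs.length (b * cs.simple i) = cs.length b + 1) :
    ∃ j, cs.simple (d i) * a = a * cs.simple j ∧
      IsMinReachable cs J J' δ v a (cs.simple j * b) := by
  have hb : b ∈ parab cs J := (Subgroup.mul_mem_cancel_right _ (simple_mem_parab hi)).1 h.mem
  have hstep : ToRel cs J J' δ v (cs.simple (d i) * a * b) := by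
    refine h.toRel.tail (hd.stepRel hi (by simp [mul_assoc]) ?_)
    rw [h.isMinRep.length_mul h.mem, hlen, mul_assoc]
    have := cs.length_simple_mul (a * b) (d i)
    have := h.isMinRep.length_mul hb
    omega
  obtain hmin | ⟨j, hj, e⟩ := h.isMinRep.simple_mul (d i)
  · have := h.length_le _ _ hmin hb hstep
    omega
  · rw [e, mul_assoc] at hstep
    have hlen' : cs.length (cs.simple j * b) ≤ cs.length (b * cs.simple i) := by
      have := cs.length_simple_mul b j
      omega
    exact ⟨j, e, h.isMinRep, mul_mem (simple_mem_parab hj) hb, hstep, fun a' b' ha' hb' h' ↦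
      hlen'.trans (h.length_le a' b' ha' hb' h')⟩

lemma IsMinReachable.length_eq {v a b b' : W} (h : IsMinReachable cs J J' δ v a b)
    (h' : IsMinReachable cs J J' δ v a b') : cs.length b = cs.length b' :=
  le_antisymm (h.length_le a b' h'.isMinRep h'.mem h'.toRel)
    (h'.length_le a b h.isMinRep h.mem h.toRel)

lemma IsMinReachable.mem_parab_movable (hd : IsLetterMap cs J J' δ d) {v a b : W} {L : Set B}
    (hL : ∀ b, IsMinReachable cs J J' δ v a b → b ∈ parab cs L)
    (h : IsMinReachable cs J J' δ v a b) : b ∈ parab cs (movable cs d a L) := by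
  -- Rotating the letters of `b` one by one, we meet every letter of `b` as a last letter.
  refine parab_induction_right (P := fun b ↦ ∀ c, IsMinReachable cs J J' δ v a (c * b) →
    cs.length (c * b) = cs.length c + cs.length b → b ∈ parab cs (movable cs d a L))
    (fun _ _ _ ↦ one_mem _) (fun b _ i hi hbi ih c h hlen ↦ ?_) h.mem 1 (by simpa using h)
    (by simp)
  rw [← mul_assoc] at h hlen
  have hcb := cs.length_mul_le c b
  have hcbi := cs.length_mul_simple (c * b) i
  obtain ⟨j, e, hj⟩ := h.exists_rotate hd hi (by omega)
  have hlen' := h.length_eq hj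
  have hjL : j ∈ L := by
    refine mem_of_length_simple_mul_lt (hL _ hj) ?_
    rw [cs.simple_mul_simple_cancel_left]
    omega
  rw [← mul_assoc] at hj hlen'
  have hjc := cs.length_mul_le (cs.simple j * c) b
  have hj1 := cs.length_simple_mul c j
  exact mul_mem (ih (cs.simple j * c) hj (by omega)) (simple_mem_parab ⟨j, hjL, e⟩)

theorem IsLetterMap.exists_toRel_mul (hd : IsLetterMap cs J J' δ d) (hJ : J.Finite) (v : W) :
    ∃ a x, IsMinRep cs J a ∧ x ∈ parab cs (Iset cs J J' δ a) ∧ ToRel cs J J' δ v (a * x) := by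
  obtain ⟨a, b, h⟩ := exists_isMinReachable J J' δ v
  let K : Set B := ⋃ b ∈ {b | IsMinReachable cs J J' δ v a b}, support cs b
  have hK : ∀ b, IsMinReachable cs J J' δ v a b → b ∈ parab cs K := fun b hb ↦
    support_subset_iff.1 (Set.subset_biUnion_of_mem (u := support cs) hb)
  refine ⟨a, b, h.isMinRep, parab_mono (hd.subset_Iset hJ ?_ ?_) (hK b h), h.toRel⟩
  · exact Set.iUnion₂_subset fun b hb ↦ support_subset_iff.2 hb.mem
  · exact Set.iUnion₂_subset fun b hb ↦ support_subset_iff.2 (hb.mem_parab_movable hd hK)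

lemma IsLetterMap.exists_map_mul_eq (hd : IsLetterMap cs J J' δ d) {a : W} (ha : IsMinRep cs J a)
    (u : parab cs J) (hlen : cs.length (δ u * a) = cs.length (u : W) + cs.length a) :
    ∃ a' c, IsMinRep cs J a' ∧ c ∈ parab cs J ∧ δ u * a = a' * c ∧ cs.length a ≤ cs.length a' ∧
      (cs.length a' = cs.length a →
        a' = a ∧ ∀ L, c ∈ parab cs L → (u : W) ∈ parab cs (movable cs d a L)) := by
  obtain ⟨u, hu⟩ := u
  refine parab_induction_left (P := fun u ↦ ∀ hu : u ∈ parab cs J,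
    cs.length (δ ⟨u, hu⟩ * a) = cs.length u + cs.length a →
    ∃ a' c, IsMinRep cs J a' ∧ c ∈ parab cs J ∧ δ ⟨u, hu⟩ * a = a' * c ∧
      cs.length a ≤ cs.length a' ∧ (cs.length a' = cs.length a →
        a' = a ∧ ∀ L, c ∈ parab cs L → u ∈ parab cs (movable cs d a L)))
    (fun h _ ↦ ⟨a, 1, ha, one_mem _, ?_, le_rfl, fun _ ↦ ⟨rfl, fun _ _ ↦ one_mem _⟩⟩)
    (fun u hu i hi hui ih h hlen ↦ ?_) hu hu hlen
  · rw [show (⟨1, h⟩ : parab cs J) = 1 from rfl, map_one, Subgroup.coe_one, one_mul, mul_one]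
  rw [show (⟨cs.simple i * u, h⟩ : parab cs J) = sJ cs J i hi * ⟨u, hu⟩ from rfl,
    hd.map_sJ_mul, mul_assoc] at hlen ⊢
  have hua := cs.length_mul_le (δ ⟨u, hu⟩ : W) a
  have hδu := hd.length_map_le ⟨u, hu⟩
  have hdua := cs.length_simple_mul (δ ⟨u, hu⟩ * a) (d i)
  obtain ⟨a', c, ha', hc, e, hle, heq⟩ := ih hu (by simp only at hδu; omega)
  rw [e] at hlen hua ⊢
  have hac := ha'.length_mul hc
  obtain hda | ⟨j, hj, hda⟩ := ha'.simple_mul (d i)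
  · have hdac := hda.length_mul hc
    rw [mul_assoc] at hdac
    exact ⟨_, c, hda, hc, (mul_assoc _ _ _).symm, by simp only at hδu; omega,
      by simp only at hδu; omega⟩
  · rw [← mul_assoc, hda, mul_assoc] at hlen ⊢
    have hjc := mul_mem (simple_mem_parab hj) hc
    have hajc := ha'.length_mul hjc
    refine ⟨a', _, ha', hjc, rfl, hle, fun h' ↦ ?_⟩
    obtain ⟨rfl, hL⟩ := heq h'
    refine ⟨rfl, fun L hcL ↦ ?_⟩
    have hjL : j ∈ L := by
      refine mem_of_length_simple_mul_lt hcL ?_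
      rw [cs.simple_mul_simple_cancel_left]
      simp only at hδu
      omega
    exact mul_mem (simple_mem_parab ⟨j, hjL, hda⟩)
      (hL L ((Subgroup.mul_mem_cancel_left _ (simple_mem_parab hjL)).1 hcL))

lemma IsLetterMap.length_map_mul_mul_le (hd : IsLetterMap cs J J' δ d) (u : parab cs J) (a x : W) :
    cs.length (δ u * a * x) ≤ cs.length (u : W) + cs.length a + cs.length x := by
  have h₁ := cs.length_mul_le (δ u * a) x
  have h₂ := cs.length_mul_le (δ u : W) a
  have h₃ := hd.length_map_le u
  omega

lemma IsLetterMap.length_le_and_mem_of_conj (hd : IsLetterMap cs J J' δ d) {a a' x x' : W}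
    (ha : IsMinRep cs J a) (ha' : IsMinRep cs J a') (hx : x ∈ parab cs J) (hx' : x' ∈ parab cs J)
    {u : parab cs J} (h : δ u * a * x = a' * x' * u)
    (hlen : cs.length (a' * x' * u) = cs.length (u : W) + cs.length a + cs.length x) :
    cs.length a ≤ cs.length a' ∧ (cs.length a' = cs.length a → a' = a ∧
      ∀ L, x ∈ parab cs L → x' ∈ parab cs L → (u : W) ∈ parab cs L →
        (u : W) ∈ parab cs (movable cs d a L)) := by
  have hua : cs.length (δ u * a) = cs.length (u : W) + cs.length a := by
    have h₁ := cs.length_mul_le (δ u * a) x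
    have h₂ := hd.length_map_mul_mul_le u a 1
    rw [mul_one, cs.length_one] at h₂
    rw [h] at h₁
    omega
  obtain ⟨b, c, hb, hc, e, hle, heq⟩ := hd.exists_map_mul_eq ha u hua
  rw [e, mul_assoc, mul_assoc] at h
  obtain ⟨rfl, hcx⟩ := hb.eq_and_eq_of_mul_eq_mul ha' (mul_mem hc hx) (mul_mem hx' u.2) h
  refine ⟨hle, fun h' ↦ ⟨(heq h').1, fun L hxL hxL' huL ↦ (heq h').2 L ?_⟩⟩
  exact (Subgroup.mul_mem_cancel_right _ hxL).1 (hcx ▸ mul_mem hxL' huL)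

lemma map_inv_mul_eq {a a' x x' : W} {u : parab cs J} (h : δ u * a * x = a' * x' * u) :
    δ u⁻¹ * a' * x' = a * x * (u⁻¹ : parab cs J) := by
  rw [map_inv, Subgroup.coe_inv, Subgroup.coe_inv, mul_assoc, inv_mul_eq_iff_eq_mul, ← mul_assoc,
    ← mul_assoc, h, mul_inv_cancel_right]

lemma IsMinRep.length_mul_mul {I : Set B} (hI : I ⊆ J) {a x u : W} (ha : IsMinRep cs J a)
    (hx : x ∈ parab cs I) (hu : u ∈ parab cs J) (hmin : IsMinRep cs I u⁻¹) :
    cs.length (a * x * u) = cs.length a + cs.length x + cs.length u := by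
  have := hmin.length_mul (inv_mem hx)
  rw [← mul_inv_rev, cs.length_inv, cs.length_inv, cs.length_inv] at this
  rw [mul_assoc, ha.length_mul (mul_mem (parab_mono hI hx) hu)]
  omega

lemma IsLetterMap.exists_sJ_mul_conj (hd : IsLetterMap cs J J' δ d) (hJ : J.Finite) {a a' x x' : W}
    {u : parab cs J} (hx' : x' ∈ parab cs (Iset cs J J' δ a')) (h : δ u * a * x = a' * x' * u)
    {i : B} (hi : i ∈ Iset cs J J' δ a') (hiJ : i ∈ J) :
    ∃ y ∈ parab cs (Iset cs J J' δ a'),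
      δ (sJ cs J i hiJ * u) * a * x = a' * y * (sJ cs J i hiJ * u : parab cs J) := by
  obtain ⟨j, hj, e⟩ := hd.Iset_subset_movable hJ a' hi
  refine ⟨cs.simple j * x' * cs.simple i, mul_mem (mul_mem (simple_mem_parab hj) hx')
    (simple_mem_parab hi), ?_⟩
  rw [hd.map_sJ_mul, mul_assoc, mul_assoc, ← mul_assoc (δ u : W), h, Subgroup.coe_mul]
  simp only [← mul_assoc, e, sJ, cs.simple_mul_simple_cancel_right]

theorem IsLetterMap.eq_and_mem_of_conj_of_isMinRep (hd : IsLetterMap cs J J' δ d) (hJ : J.Finite)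
    {a a' x x' : W} (ha : IsMinRep cs J a) (ha' : IsMinRep cs J a')
    (hx : x ∈ parab cs (Iset cs J J' δ a)) (hx' : x' ∈ parab cs (Iset cs J J' δ a'))
    {u : parab cs J} (h : δ u * a * x = a' * x' * u)
    (hu : IsMinRep cs (Iset cs J J' δ a) u)
    (hu' : IsMinRep cs (Iset cs J J' δ a') (u⁻¹ : parab cs J)) :
    a' = a ∧ (u : W) ∈ parab cs (Iset cs J J' δ a) := by
  have hxJ := parab_mono (Iset_subset a) hx
  have hxJ' := parab_mono (Iset_subset a') hx'
  have hinv := map_inv_mul_eq h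
  have hlen := ha'.length_mul_mul (Iset_subset a') hx' u.2 hu'
  have hlen' := ha.length_mul_mul (Iset_subset a) hx (u⁻¹).2 (by simpa using hu)
  have hle := hd.length_map_mul_mul_le u a x
  have hle' := hd.length_map_mul_mul_le u⁻¹ a' x'
  rw [h] at hle
  rw [hinv] at hle'
  have : cs.length ((u⁻¹ : parab cs J) : W) = cs.length (u : W) := cs.length_inv _
  obtain ⟨haa', heq⟩ := hd.length_le_and_mem_of_conj ha ha' hxJ hxJ' h (by omega)
  obtain ⟨ha'a, -⟩ := hd.length_le_and_mem_of_conj ha' ha hxJ' hxJ hinv (by omega)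
  obtain ⟨rfl, hmov⟩ := heq (ha'a.antisymm haa')
  refine ⟨rfl, ?_⟩
  let K := Iset cs J J' δ a' ∪ support cs (u : W)
  have hIK : Iset cs J J' δ a' ⊆ K := Set.subset_union_left
  have huK : (u : W) ∈ parab cs K := support_subset_iff.1 Set.subset_union_right
  refine parab_mono (hd.subset_Iset hJ (Set.union_subset (Iset_subset a')
    (support_subset_iff.2 u.2)) (Set.union_subset ?_ ?_)) huK
  · exact (hd.Iset_subset_movable hJ a').trans (movable_mono a' hIK)
  · exact support_subset_iff.2 (hmov K (parab_mono hIK hx) (parab_mono hIK hx') huK)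

theorem IsLetterMap.eq_and_mem_of_conj (hd : IsLetterMap cs J J' δ d) (hJ : J.Finite)
    {a a' x x' : W} (ha : IsMinRep cs J a) (ha' : IsMinRep cs J a')
    (hx : x ∈ parab cs (Iset cs J J' δ a)) (hx' : x' ∈ parab cs (Iset cs J J' δ a'))
    {u : parab cs J} (h : δ u * a * x = a' * x' * u) :
    a' = a ∧ (u : W) ∈ parab cs (Iset cs J J' δ a) := by
  induction hn : cs.length (u : W) using Nat.strong_induction_on generalizing a a' x x' u with
  | _ n ih =>
  subst hn
  have left : ∀ {a a' x x' : W} {u' : parab cs J}, IsMinRep cs J a → IsMinRep cs J a' →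
      x ∈ parab cs (Iset cs J J' δ a) → x' ∈ parab cs (Iset cs J J' δ a') →
      δ u' * a * x = a' * x' * u' → cs.length (u' : W) = cs.length (u : W) →
      ¬ IsMinRep cs (Iset cs J J' δ a') (u'⁻¹ : parab cs J) →
      a' = a ∧ (u' : W) ∈ parab cs (Iset cs J J' δ a) := by
    intro a a' x x' u' ha ha' hx hx' h hu' hmin
    rw [not_isMinRep_iff] at hmin
    obtain ⟨i, hi, hlt⟩ := hmin
    have hiJ := Iset_subset a' hi
    obtain ⟨y, hy, hyu⟩ := hd.exists_sJ_mul_conj hJ hx' h hi hiJ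
    obtain ⟨rfl, hmem⟩ := ih _ (by
      rw [← cs.length_inv, ← hu', ← cs.length_inv u', Subgroup.coe_mul, mul_inv_rev]
      simpa [sJ] using hlt) ha ha' hx hy hyu rfl
    exact ⟨rfl, (Subgroup.mul_mem_cancel_left _ (simple_mem_parab hi)).1 hmem⟩
  by_cases hu' : IsMinRep cs (Iset cs J J' δ a') (u⁻¹ : parab cs J)
  · by_cases hu : IsMinRep cs (Iset cs J J' δ a) u
    · exact hd.eq_and_mem_of_conj_of_isMinRep hJ ha ha' hx hx' h hu hu'
    · obtain ⟨rfl, hmem⟩ := left ha' ha hx' hx (map_inv_mul_eq h) (cs.length_inv _)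
        (by rwa [inv_inv])
      exact ⟨rfl, inv_mem_iff.1 hmem⟩
  · exact left ha ha' hx hx' h rfl hu'

end FlowToSpecial

section ParabolicRoots

variable {B W : Type*} [Group W] {M : CoxeterMatrix B} {cs : CoxeterSystem M W} {I : Set B}
  {v : B →₀ ℝ}

variable (cs I) in
/-- The roots of the parabolic subgroup `W_I`. -/
def parabRoots : Set (B →₀ ℝ) :=
  {v | ∃ u ∈ parab cs I, ∃ i ∈ I, geomRep cs u (simpleRoot i) = v}

lemma simpleRoot_mem_parabRoots {i : B} (hi : i ∈ I) : simpleRoot i ∈ parabRoots cs I :=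
  ⟨1, one_mem _, i, hi, by simp⟩

lemma isRoot_of_mem_parabRoots (hv : v ∈ parabRoots cs I) : IsRoot cs v := by
  obtain ⟨u, -, i, -, rfl⟩ := hv
  exact isRoot_geomRep_simpleRoot cs u i

lemma mem_supported_of_mem_parabRoots (hv : v ∈ parabRoots cs I) :
    v ∈ Finsupp.supported ℝ ℝ I := by
  obtain ⟨u, hu, i, hi, rfl⟩ := hv
  exact geomRep_mem_supported hu (simpleRoot_mem_supported hi)

lemma geomRep_mem_parabRoots {u : W} (hu : u ∈ parab cs I) (hv : v ∈ parabRoots cs I) :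
    geomRep cs u v ∈ parabRoots cs I := by
  obtain ⟨x, hx, i, hi, rfl⟩ := hv
  exact ⟨u * x, mul_mem hu hx, i, hi, geomRep_mul_apply ..⟩

lemma geomRep_mem_parabRoots_iff {u : W} (hu : u ∈ parab cs I) :
    geomRep cs u v ∈ parabRoots cs I ↔ v ∈ parabRoots cs I :=
  ⟨fun h ↦ by simpa only [geomRep_inv_apply_self] using geomRep_mem_parabRoots (inv_mem hu) h,
    geomRep_mem_parabRoots hu⟩

lemma neg_mem_parabRoots (hv : v ∈ parabRoots cs I) : -v ∈ parabRoots cs I := by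
  obtain ⟨u, hu, i, hi, rfl⟩ := hv
  refine ⟨u * cs.simple i, mul_mem hu (simple_mem_parab hi), i, hi, ?_⟩
  rw [geomRep_mul_apply, geomRep_simple_apply_self, map_neg]

lemma finite_parabRoots (hfin : (parab cs I : Set W).Finite) : (parabRoots cs I).Finite := by
  have hI : I.Finite := Set.Finite.of_finite_image
    (hfin.subset (Set.image_subset_iff.2 fun _ ↦ simple_mem_parab)) simple_injective.injOn
  refine (hfin.image2 (fun u i ↦ geomRep cs u (simpleRoot i)) hI).subset ?_
  rintro v ⟨u, hu, i, hi, rfl⟩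
  exact Set.mem_image2_of_mem hu hi

open Classical in
/-- The sign of a root: `1` for a positive root and `-1` for a negative root. -/
noncomputable def rootSign (v : B →₀ ℝ) : ℤ := if 0 ≤ v then 1 else -1

lemma rootSign_of_nonneg (h : 0 ≤ v) : rootSign v = 1 := if_pos h

lemma rootSign_mul_self (v : B →₀ ℝ) : rootSign v * rootSign v = 1 := by
  rw [rootSign]
  split_ifs <;> rfl

lemma IsRoot.rootSign_neg (hv : IsRoot cs v) : rootSign (-v) = -rootSign v := by
  have h0 := hv.ne_zero
  obtain h | h := hv.nonneg_or_nonpos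
  · rw [rootSign_of_nonneg h, rootSign, if_neg fun h' ↦ h0 (le_antisymm (neg_nonneg.1 h') h)]
  · rw [rootSign_of_nonneg (neg_nonneg.2 h), rootSign, if_neg fun h' ↦ h0 (le_antisymm h h'),
      neg_neg]

lemma IsRoot.eq_rootSign (hv : IsRoot cs v) {s : (B →₀ ℝ) → ℤ} (hneg : s (-v) = -s v)
    (h : 0 ≤ v → s v = 1) (h' : 0 ≤ -v → s (-v) = 1) : s v = rootSign v := by
  obtain hp | hn := hv.nonneg_or_nonpos
  · rw [h hp, rootSign_of_nonneg hp]
  · have := h' (neg_nonneg.2 hn)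
    have := rootSign_of_nonneg (neg_nonneg.2 hn)
    rw [hv.rootSign_neg] at this
    omega

lemma IsRoot.rootSign_geomRep_simple {i : B} (hv : IsRoot cs v) (h : v ≠ simpleRoot i)
    (h' : v ≠ -simpleRoot i) : rootSign (PartialConjugation.geomRep cs (cs.simple i) v) =
      rootSign v := by
  have hnv : IsRoot cs (-v) := by
    obtain ⟨w, j, rfl⟩ := hv
    exact ⟨w * cs.simple j, j, by rw [geomRep_mul_apply, geomRep_simple_apply_self, map_neg]⟩
  refine hv.eq_rootSign (s := fun v ↦ rootSign (PartialConjugation.geomRep cs (cs.simple i) v))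
    ?_ (fun hp ↦ rootSign_of_nonneg (hv.geomRep_simple_nonneg hp h))
    fun hp ↦ rootSign_of_nonneg (hnv.geomRep_simple_nonneg hp fun e ↦ h' (by rw [← e, neg_neg]))
  simp only [map_neg, (hv.geomRep _).rootSign_neg]

section Fintype

variable [Fintype (parabRoots cs I)]

lemma sum_geomRep_parabRoots {E : Type*} [AddCommMonoid E] {u : W} (hu : u ∈ parab cs I)
    (f : (B →₀ ℝ) → E) :
    ∑ v : parabRoots cs I, f (geomRep cs u v) = ∑ v : parabRoots cs I, f v :=
  ((geomRep cs u).toEquiv.subtypeEquiv fun _ ↦ (geomRep_mem_parabRoots_iff hu).symm).sum_comp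
    fun v : parabRoots cs I ↦ f v

lemma sum_rootSign_geomRep_simple_smul {E : Type*} [AddCommGroup E] {i : B} (hi : i ∈ I)
    (f : (B →₀ ℝ) → E) :
    ∑ v : parabRoots cs I, rootSign (geomRep cs (cs.simple i) v) • f v =
      ∑ v : parabRoots cs I, rootSign (v : B →₀ ℝ) • f v -
        ((2 : ℤ) • f (simpleRoot i) - (2 : ℤ) • f (-simpleRoot i)) := by
  classical
  let a : parabRoots cs I := ⟨simpleRoot i, simpleRoot_mem_parabRoots hi⟩
  let a' : parabRoots cs I := ⟨-simpleRoot i, neg_mem_parabRoots a.2⟩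
  have hsign : rootSign (simpleRoot i) = 1 := rootSign_of_nonneg (by simp)
  have hsign' : rootSign (-simpleRoot i) = -1 := by
    rw [(isRoot_of_mem_parabRoots a.2).rootSign_neg, hsign]
  have hne : a ≠ a' := fun e ↦ by
    have := congrArg rootSign (congrArg Subtype.val e)
    rw [hsign, hsign'] at this
    norm_num at this
  rw [eq_sub_iff_add_eq, ← eq_sub_iff_add_eq', ← Finset.sum_sub_distrib,
    ← Finset.sum_subset (Finset.subset_univ {a, a'}) fun v _ hv ↦ ?_, Finset.sum_pair hne]
  · simp only [a, a', map_neg, geomRep_simple_apply_self, neg_neg, hsign, hsign']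
    module
  · simp only [Finset.mem_insert, Finset.mem_singleton, not_or, Subtype.ext_iff] at hv
    rw [(isRoot_of_mem_parabRoots v.2).rootSign_geomRep_simple hv.1 hv.2, sub_self]

theorem sum_rootSign_mul_rootSign_geomRep {y : W} (hy : y ∈ parab cs I) :
    ∑ v : parabRoots cs I, rootSign (v : B →₀ ℝ) * rootSign (geomRep cs y v) =
      Fintype.card (parabRoots cs I) - 4 * cs.length y := by
  refine parab_induction_right (P := fun y ↦
    ∑ v : parabRoots cs I, rootSign (v : B →₀ ℝ) * rootSign (geomRep cs y v) =
      Fintype.card (parabRoots cs I) - 4 * (cs.length y : ℤ)) ?_ (fun y _ i hi hlen ih ↦ ?_) hy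
  · simp [rootSign_mul_self]
  · have hα : 0 ≤ geomRep cs y (simpleRoot i) := by
      rw [geomRep_simpleRoot_nonneg_iff]
      omega
    have hflip := sum_rootSign_geomRep_simple_smul (cs := cs) hi fun v ↦ rootSign (geomRep cs y v)
    simp only [smul_eq_mul, map_neg, (isRoot_geomRep_simpleRoot cs y i).rootSign_neg,
      rootSign_of_nonneg hα, ih] at hflip
    rw [← sum_geomRep_parabRoots (simple_mem_parab hi)
      fun v ↦ rootSign v * rootSign (geomRep cs (y * cs.simple i) v)]
    simp only [← geomRep_mul_apply, cs.simple_mul_simple_cancel_right, hflip, hlen]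
    push_cast
    ring

variable (cs I) in
/-- The sum of the roots of `W_I` weighted by their signs: four times the half sum of the
positive roots. -/
noncomputable def signedRootSum : B →₀ ℝ :=
  ∑ v : parabRoots cs I, rootSign (v : B →₀ ℝ) • (v : B →₀ ℝ)

lemma geomRep_simple_signedRootSum {i : B} (hi : i ∈ I) :
    geomRep cs (cs.simple i) (signedRootSum cs I) =
      signedRootSum cs I - (4 : ℝ) • simpleRoot i := by
  have hflip := sum_rootSign_geomRep_simple_smul (cs := cs) hi fun v ↦ v
  rw [signedRootSum, map_sum,
    ← sum_geomRep_parabRoots (simple_mem_parab hi) fun v ↦ geomRep cs _ (rootSign v • v)]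
  simp only [map_zsmul, ← geomRep_mul_apply, cs.simple_mul_simple_self, map_one,
    LinearEquiv.coe_one, id, hflip]
  module

lemma titsForm_simpleRoot_signedRootSum {i : B} (hi : i ∈ I) :
    titsForm M (simpleRoot i) (signedRootSum cs I) = 2 := by
  have h := congrArg (· i) (geomRep_simple_signedRootSum (cs := cs) hi)
  simp only [geomRep_simple_apply, Finsupp.sub_apply, Finsupp.smul_apply, Finsupp.single_eq_same,
    smul_eq_mul] at h
  linarith

lemma titsForm_signedRootSum_pos (hv : v ∈ parabRoots cs I) (hpos : 0 ≤ v) :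
    0 < titsForm M v (signedRootSum cs I) := by
  have hsum : titsForm M v (signedRootSum cs I) = ∑ k ∈ v.support, v k * 2 := by
    nth_rw 1 [← Finsupp.sum_single v]
    rw [Finsupp.sum, map_sum, LinearMap.sum_apply]
    refine Finset.sum_congr rfl fun k hk ↦ ?_
    rw [← mul_one (v k), ← smul_eq_mul (v k), ← Finsupp.smul_single, map_smul,
      LinearMap.smul_apply, smul_eq_mul, titsForm_simpleRoot_signedRootSum
        (mem_supported_of_mem_parabRoots hv hk), smul_eq_mul, mul_one]
  rw [hsum]
  have hne := (isRoot_of_mem_parabRoots hv).ne_zero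
  refine Finset.sum_pos (fun k hk ↦ ?_) (Finsupp.support_nonempty_iff.2 hne)
  exact mul_pos ((hpos k).lt_of_ne' (Finsupp.mem_support_iff.1 hk)) two_pos

lemma sign_titsForm_signedRootSum (hv : v ∈ parabRoots cs I) :
    (SignType.sign (titsForm M v (signedRootSum cs I)) : ℤ) = rootSign v := by
  refine (isRoot_of_mem_parabRoots hv).eq_rootSign
    (s := fun v ↦ (SignType.sign (titsForm M v (signedRootSum cs I)) : ℤ)) ?_ ?_ ?_
  · simp only [map_neg, LinearMap.neg_apply, Left.sign_neg, SignType.coe_neg]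
  · intro h
    simp only [sign_pos (titsForm_signedRootSum_pos hv h), SignType.coe_one]
  · intro h
    simp only [sign_pos (titsForm_signedRootSum_pos (neg_mem_parabRoots hv) h), SignType.coe_one]

lemma nonneg_of_titsForm_signedRootSum_pos (hv : v ∈ parabRoots cs I)
    (h : 0 < titsForm M v (signedRootSum cs I)) : 0 ≤ v := by
  have hsign := sign_titsForm_signedRootSum hv
  rw [sign_pos h, rootSign] at hsign
  by_contra hneg
  rw [if_neg hneg] at hsign
  norm_num at hsign

end Fintype

lemma eq_simpleRoot_of_forall_titsForm_eq [Finite (parabRoots cs I)] {i : B} (hi : i ∈ I)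
    (hv : v ∈ parabRoots cs I)
    (h : ∀ c ∈ parabRoots cs I, titsForm M v c = titsForm M (simpleRoot i) c) :
    v = simpleRoot i := by
  -- Otherwise `v` is positive and stays positive under `s_i`, whereas pairing with the signed
  -- root sum gives `B(s_i v, ρ) = 2 - 4`.
  have := Fintype.ofFinite (parabRoots cs I)
  have hρ : titsForm M v (signedRootSum cs I) = 2 := by
    rw [← titsForm_simpleRoot_signedRootSum (cs := cs) hi, signedRootSum, map_sum, map_sum]
    simp only [map_zsmul, h _ (Subtype.property _)]
  by_contra hne
  have hpos := (isRoot_of_mem_parabRoots hv).geomRep_simple_nonneg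
    (nonneg_of_titsForm_signedRootSum_pos hv (by rw [hρ]; norm_num)) hne
  have hlt := titsForm_signedRootSum_pos
    (geomRep_mem_parabRoots (simple_mem_parab hi) hv) hpos
  have hα : titsForm M (simpleRoot i) v = 1 := by
    rw [titsForm_comm, h _ (simpleRoot_mem_parabRoots hi), titsForm_simpleRoot_self]
  rw [geomRep_simple_apply, hα, map_sub, map_smul, LinearMap.sub_apply, LinearMap.smul_apply, hρ,
    titsForm_simpleRoot_signedRootSum hi] at hlt
  norm_num at hlt

theorem eq_of_forall_titsForm_eq [Finite (parabRoots cs I)] {v' : B →₀ ℝ} (hv : v ∈ parabRoots cs I)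
    (hv' : v' ∈ parabRoots cs I)
    (h : ∀ c ∈ parabRoots cs I, titsForm M v c = titsForm M v' c) : v = v' := by
  obtain ⟨u, hu, i, hi, rfl⟩ := hv'
  rw [← geomRep_apply_inv_self cs u v, eq_simpleRoot_of_forall_titsForm_eq hi
    (geomRep_mem_parabRoots (inv_mem hu) hv) fun c hc ↦ ?_]
  rw [← titsForm_geomRep cs u, geomRep_apply_inv_self, h _ (geomRep_mem_parabRoots hu hc),
    titsForm_geomRep]

theorem eq_one_or_eq_simple_of_forall_geomRep_nonpos {y : W} (hy : y ∈ parab cs I)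
    (h : ∀ v ∈ parabRoots cs I, ∀ v' ∈ parabRoots cs I, 0 ≤ v → 0 ≤ v' → geomRep cs y v ≤ 0 →
      geomRep cs y v' ≤ 0 → v = v') : y = 1 ∨ ∃ i ∈ I, y = cs.simple i := by
  refine or_iff_not_imp_left.2 fun hne ↦ ?_
  obtain ⟨i, hi⟩ := cs.exists_rightDescent_of_ne_one hne
  have hiI := mem_of_length_mul_simple_lt hy hi
  refine ⟨i, hiI, by_contra fun hyi ↦ ?_⟩
  have hne' : y * cs.simple i ≠ 1 := fun e ↦ hyi (by simpa using eq_inv_of_mul_eq_one_left e)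
  obtain ⟨j, hj⟩ := cs.exists_rightDescent_of_ne_one hne'
  rw [CoxeterSystem.IsRightDescent] at hi hj
  have hjI := mem_of_length_mul_simple_lt (mul_mem hy (simple_mem_parab hiI)) hj
  have hji : j ≠ i := by
    rintro rfl
    rw [cs.simple_mul_simple_cancel_right] at hj
    omega
  have hneg := geomRep_simpleRoot_nonpos cs _ _ hj
  rw [geomRep_mul_apply] at hneg
  have hα := simpleRoot_mem_parabRoots (cs := cs) hjI
  have hpos := (isRoot_of_mem_parabRoots hα).geomRep_simple_nonneg (i := i) (by simp)
    (by simpa [Finsupp.single_left_inj] using hji)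
  have heq := h _ (simpleRoot_mem_parabRoots hiI) _
    (geomRep_mem_parabRoots (simple_mem_parab hiI) hα) (by simp) hpos
    (geomRep_simpleRoot_nonpos cs y i hi) hneg
  have := congrArg (geomRep cs (cs.simple i)) heq
  rw [← geomRep_mul_apply, cs.simple_mul_simple_self, geomRep_simple_apply_self, map_one,
    LinearEquiv.coe_one, id] at this
  have hle : (simpleRoot j : B →₀ ℝ) j ≤ 0 := by
    rw [← this]
    simp [hji.symm]
  norm_num [simpleRoot] at hle

end ParabolicRoots

section Relabel

variable {B W : Type*} [Group W] {M : CoxeterMatrix B} {cs : CoxeterSystem M W} {J J' : Set B}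
  {δ : parab cs J ≃* parab cs J'} {d : B → B} {v w : B →₀ ℝ}

/-- The linear map `α_i ↦ α_{d i}` by which a map of letters acts on the Tits representation
space. -/
noncomputable abbrev relabel (d : B → B) : (B →₀ ℝ) →ₗ[ℝ] (B →₀ ℝ) := Finsupp.lmapDomain ℝ ℝ d

lemma eq_of_mem_supported {E : Type*} [AddCommGroup E] [Module ℝ E] {f g : (B →₀ ℝ) →ₗ[ℝ] E}
    (h : ∀ i ∈ J, f (simpleRoot i) = g (simpleRoot i)) (hv : v ∈ Finsupp.supported ℝ ℝ J) :
    f v = g v := by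
  rw [Finsupp.supported_eq_span_single] at hv
  exact LinearMap.eqOn_span (Set.forall_mem_image.2 h) hv

namespace IsLetterMap

lemma mem (hd : IsLetterMap cs J J' δ d) {i : B} (hi : i ∈ J) : d i ∈ J' := by
  refine mem_of_length_mul_simple_lt (u := cs.simple (d i)) (hd i hi ▸ Subtype.property _) ?_
  simp

lemma coxeterMatrix_eq (hd : IsLetterMap cs J J' δ d) {i j : B} (hi : i ∈ J) (hj : j ∈ J) :
    M (d i) (d j) = M i j := by
  rw [← orderOf_simple_mul_simple cs, ← hd i hi, ← hd j hj, ← Subgroup.coe_mul, ← map_mul,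
    Subgroup.orderOf_coe, MulEquiv.orderOf_eq, ← Subgroup.orderOf_coe]
  exact orderOf_simple_mul_simple cs i j

lemma titsForm_relabel (hd : IsLetterMap cs J J' δ d) (hv : v ∈ Finsupp.supported ℝ ℝ J)
    (hw : w ∈ Finsupp.supported ℝ ℝ J) :
    titsForm M (relabel d v) (relabel d w) = titsForm M v w := by
  refine eq_of_mem_supported (f := (titsForm M).flip (relabel d w) ∘ₗ relabel d)
    (g := (titsForm M).flip w) (fun i hi ↦ ?_) hv
  refine eq_of_mem_supported (f := titsForm M (relabel d (simpleRoot i)) ∘ₗ relabel d)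
    (g := titsForm M (simpleRoot i)) (fun j hj ↦ ?_) hw
  simp only [LinearMap.comp_apply, Finsupp.lmapDomain_apply, Finsupp.mapDomain_single,
    titsForm_simpleRoot, hd.coxeterMatrix_eq hi hj]

lemma relabel_geomRep (hd : IsLetterMap cs J J' δ d) (hv : v ∈ Finsupp.supported ℝ ℝ J)
    (u : parab cs J) : relabel d (geomRep cs u v) = geomRep cs (δ u) (relabel d v) := by
  obtain ⟨u, hu⟩ := u
  refine parab_induction_left (P := fun u ↦ ∀ hu : u ∈ parab cs J,
    relabel d (geomRep cs u v) = geomRep cs (δ ⟨u, hu⟩) (relabel d v))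
    (fun h ↦ ?_) (fun u hu i hi _ ih h ↦ ?_) hu hu
  · rw [show (⟨1, h⟩ : parab cs J) = 1 from rfl, map_one, map_one, Subgroup.coe_one, map_one]
    rfl
  · have hform := hd.titsForm_relabel (simpleRoot_mem_supported hi) (geomRep_mem_supported hu hv)
    rw [show (⟨cs.simple i * u, h⟩ : parab cs J) = sJ cs J i hi * ⟨u, hu⟩ from rfl,
      hd.map_sJ_mul, geomRep_mul_apply, geomRep_mul_apply, ← ih hu, geomRep_simple_apply,
      geomRep_simple_apply, map_sub, map_smul, ← hform, Finsupp.lmapDomain_apply,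
      Finsupp.lmapDomain_apply, Finsupp.mapDomain_single]

lemma relabel_mem_parabRoots (hd : IsLetterMap cs J J' δ d) (hv : v ∈ parabRoots cs J) :
    relabel d v ∈ parabRoots cs J' := by
  obtain ⟨u, hu, i, hi, rfl⟩ := hv
  refine ⟨δ ⟨u, hu⟩, Subtype.property _, d i, hd.mem hi, ?_⟩
  rw [hd.relabel_geomRep (simpleRoot_mem_supported hi) ⟨u, hu⟩, Finsupp.lmapDomain_apply,
    Finsupp.mapDomain_single]

lemma injOn_relabel (hd : IsLetterMap cs J J' δ d) :
    Set.InjOn (relabel d) (Finsupp.supported ℝ ℝ J : Set (B →₀ ℝ)) :=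
  Finsupp.mapDomain_injOn J hd.injOn

lemma rootSign_relabel (hd : IsLetterMap cs J J' δ d) (hv : v ∈ parabRoots cs J) :
    rootSign (relabel d v) = rootSign v := by
  have hpos {v : B →₀ ℝ} (h : 0 ≤ v) : 0 ≤ relabel d v :=
    Finsupp.sum_nonneg' fun k ↦ Finsupp.single_nonneg.2 (h k)
  refine (isRoot_of_mem_parabRoots hv).eq_rootSign (s := fun v ↦ rootSign (relabel d v)) ?_
    (fun h ↦ rootSign_of_nonneg (hpos h)) fun h ↦ rootSign_of_nonneg (hpos h)
  simp only [map_neg, (isRoot_of_mem_parabRoots (hd.relabel_mem_parabRoots hv)).rootSign_neg]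

end IsLetterMap

end Relabel

section RootArrangement

open scoped InnerProductSpace

variable {B W : Type*} [Group W] {M : CoxeterMatrix B} {cs : CoxeterSystem M W} {I : Set B}

variable (cs I) in
/-- The embedding `v ↦ (B(v, b))_b` of the Tits representation space in the Euclidean space on the
roots of `W_I`.  It separates roots, and isometries of the Tits form permuting the roots act on its
image through coordinate permutations. -/
noncomputable def rootVector : (B →₀ ℝ) →ₗ[ℝ] EuclideanSpace ℝ (parabRoots cs I) :=
  (WithLp.linearEquiv 2 ℝ (parabRoots cs I → ℝ)).symm ∘ₗ
    LinearMap.pi fun b : parabRoots cs I ↦ (titsForm M).flip b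

@[simp]
lemma rootVector_apply (v : B →₀ ℝ) (b : parabRoots cs I) :
    rootVector cs I v b = titsForm M v b := rfl

lemma injOn_rootVector [Finite (parabRoots cs I)] :
    Set.InjOn (rootVector cs I) (parabRoots cs I) := fun _ hv _ hv' h ↦
  eq_of_forall_titsForm_eq hv hv' fun c hc ↦ congrArg (· ⟨c, hc⟩) h

variable [Fintype (parabRoots cs I)]

lemma inner_rootVector (f : EuclideanSpace ℝ (parabRoots cs I)) (v : B →₀ ℝ) :
    ⟪f, rootVector cs I v⟫_ℝ = ∑ b : parabRoots cs I, f b * titsForm M v b := by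
  simp only [PiLp.inner_apply, rootVector_apply, RCLike.inner_apply, conj_trivial,
    mul_comm]

open Classical in
variable (cs I) in
/-- The arrangement of the hyperplanes orthogonal to the vectors attached to the roots of `W_I`. -/
noncomputable def rootArrangement : Finset (EuclideanSpace ℝ (parabRoots cs I)) :=
  Finset.univ.image fun b : parabRoots cs I ↦ rootVector cs I b

lemma mem_rootArrangement {a : EuclideanSpace ℝ (parabRoots cs I)} :
    a ∈ rootArrangement cs I ↔ ∃ b ∈ parabRoots cs I, rootVector cs I b = a := by
  simp [rootArrangement]

lemma rootVector_mem_rootArrangement {b : B →₀ ℝ} (hb : b ∈ parabRoots cs I) :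
    rootVector cs I b ∈ rootArrangement cs I :=
  mem_rootArrangement.2 ⟨b, hb, rfl⟩

lemma piLpCongrLeft_rootVector {e : Equiv.Perm (parabRoots cs I)}
    (he : ∀ v w, titsForm M (e v : B →₀ ℝ) (e w) = titsForm M (v : B →₀ ℝ) w)
    (v : parabRoots cs I) :
    LinearIsometryEquiv.piLpCongrLeft 2 ℝ ℝ e (rootVector cs I v) = rootVector cs I (e v) := by
  ext b
  rw [LinearIsometryEquiv.piLpCongrLeft_apply, rootVector_apply, ← e.apply_symm_apply b, he]
  simp

lemma isStableArrangement_rootArrangement {e : Equiv.Perm (parabRoots cs I)}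
    (he : ∀ v w, titsForm M (e v : B →₀ ℝ) (e w) = titsForm M (v : B →₀ ℝ) w) :
    IsStableArrangement (rootArrangement cs I) (LinearIsometryEquiv.piLpCongrLeft 2 ℝ ℝ e) where
  map_mem_iff a := by
    rw [mem_rootArrangement, mem_rootArrangement]
    constructor
    · rintro ⟨b, hb, hba⟩
      refine ⟨e.symm ⟨b, hb⟩, Subtype.property _, ?_⟩
      apply (LinearIsometryEquiv.piLpCongrLeft 2 ℝ ℝ e).injective
      rw [piLpCongrLeft_rootVector he, e.apply_symm_apply, hba]
    · rintro ⟨b, hb, rfl⟩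
      exact ⟨e ⟨b, hb⟩, Subtype.property _, (piLpCongrLeft_rootVector he ⟨b, hb⟩).symm⟩
  eq_or_eq_neg {a c} ha hca := by
    obtain ⟨b, hb, rfl⟩ := mem_rootArrangement.1 ha
    obtain ⟨b', hb', h⟩ := mem_rootArrangement.1 hca
    have hcoord (v : parabRoots cs I) : titsForm M b' v = c * titsForm M b v :=
      congrArg (· v) h
    have h₁ := hcoord ⟨b, hb⟩
    have h₂ := hcoord ⟨b', hb'⟩
    rw [(isRoot_of_mem_parabRoots hb).titsForm_self, mul_one] at h₁
    rw [(isRoot_of_mem_parabRoots hb').titsForm_self, titsForm_comm, h₁] at h₂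
    obtain rfl | rfl := mul_self_eq_one_iff.1 h₂.symm
    · exact .inl (one_smul ..)
    · exact .inr (neg_one_smul ..)
  zero_notMem h := by
    obtain ⟨b, hb, h0⟩ := mem_rootArrangement.1 h
    have : titsForm M b b = 0 := congrArg (· ⟨b, hb⟩) h0
    rw [(isRoot_of_mem_parabRoots hb).titsForm_self] at this
    exact one_ne_zero this

variable (cs I) in
/-- The point `f` lies in the chamber of the root arrangement that corresponds to `u ∈ W_I`, that
is, its side of the wall of each root `b` is the sign of `u b`. -/
def InChamber (f : EuclideanSpace ℝ (parabRoots cs I)) (u : W) : Prop :=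
  ∀ b ∈ parabRoots cs I, side f (rootVector cs I b) = rootSign (geomRep cs u b)

lemma InChamber.isGeneric {f : EuclideanSpace ℝ (parabRoots cs I)} {u : W}
    (h : InChamber cs I f u) : IsGeneric (rootArrangement cs I) f := by
  intro a ha h0
  obtain ⟨b, hb, rfl⟩ := mem_rootArrangement.1 ha
  have := rootSign_mul_self (geomRep cs u b)
  rw [← h b hb, side, h0] at this
  simp at this

lemma exists_inChamber {u : W} (hu : u ∈ parab cs I) : ∃ f, InChamber cs I f u := by
  let f : EuclideanSpace ℝ (parabRoots cs I) :=
    WithLp.toLp 2 fun b ↦ (rootSign (geomRep cs u b) : ℝ)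
  refine ⟨f, fun b hb ↦ ?_⟩
  have hinner : ⟪f, rootVector cs I b⟫_ℝ = titsForm M (geomRep cs u b) (signedRootSum cs I) := by
    rw [inner_rootVector, signedRootSum, map_sum,
      ← sum_geomRep_parabRoots hu fun v ↦ titsForm M (geomRep cs u b) (rootSign v • v)]
    refine Finset.sum_congr rfl fun v _ ↦ ?_
    rw [map_zsmul, titsForm_geomRep, zsmul_eq_mul]
  rw [side, hinner, sign_titsForm_signedRootSum (geomRep_mem_parabRoots hu hb)]

lemma inner_rootVector_nonneg {f : EuclideanSpace ℝ (parabRoots cs I)} {u : W} {b : B →₀ ℝ}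
    (hu : u ∈ parab cs I)
    (h : ∀ i ∈ I, 0 ≤ ⟪f, rootVector cs I (geomRep cs u⁻¹ (simpleRoot i))⟫_ℝ)
    (hb : b ∈ parabRoots cs I) (hpos : 0 ≤ geomRep cs u b) : 0 ≤ ⟪f, rootVector cs I b⟫_ℝ := by
  have hsupp := mem_supported_of_mem_parabRoots (geomRep_mem_parabRoots hu hb)
  rw [← geomRep_inv_apply_self cs u b, ← Finsupp.sum_single (geomRep cs u b), Finsupp.sum, map_sum,
    map_sum, inner_sum]
  refine Finset.sum_nonneg fun k hk ↦ ?_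
  rw [← mul_one (geomRep cs u b k), ← smul_eq_mul, ← Finsupp.smul_single, map_smul, map_smul,
    real_inner_smul_right]
  exact mul_nonneg (hpos k) (h k (hsupp hk))

/-- The group element is found by maximizing `⟪f, u⁻¹ ρ⟫` over `W_I`. -/
lemma IsGeneric.exists_inChamber (hfin : (parab cs I : Set W).Finite)
    {f : EuclideanSpace ℝ (parabRoots cs I)} (hf : IsGeneric (rootArrangement cs I) f) :
    ∃ u ∈ parab cs I, InChamber cs I f u := by
  obtain ⟨u, hu : u ∈ parab cs I, hmax⟩ := Set.exists_max_image (parab cs I : Set W)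
    (fun u ↦ ⟪f, rootVector cs I (geomRep cs u⁻¹ (signedRootSum cs I))⟫_ℝ) hfin ⟨1, one_mem _⟩
  have hsimple : ∀ i ∈ I, 0 ≤ ⟪f, rootVector cs I (geomRep cs u⁻¹ (simpleRoot i))⟫_ℝ := by
    intro i hi
    have := hmax (cs.simple i * u) (mul_mem (simple_mem_parab hi) hu)
    rw [mul_inv_rev, cs.inv_simple, geomRep_mul_apply, geomRep_simple_signedRootSum hi, map_sub,
      map_smul, map_sub, map_smul, inner_sub_right, real_inner_smul_right] at this
    linarith
  have hside : ∀ b ∈ parabRoots cs I, 0 ≤ geomRep cs u b → side f (rootVector cs I b) = 1 := by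
    intro b hb hpos
    have := inner_rootVector_nonneg hu hsimple hb hpos
    rw [side, sign_pos (this.lt_of_ne' (hf _ (rootVector_mem_rootArrangement hb))),
      SignType.coe_one]
  refine ⟨u, hu, fun b hb ↦ ?_⟩
  have := ((isRoot_of_mem_parabRoots hb).geomRep u).eq_rootSign
    (s := fun v ↦ side f (rootVector cs I (geomRep cs u⁻¹ v)))
    (by simp only [map_neg, side_neg])
    (fun h ↦ by rw [geomRep_inv_apply_self]; exact hside b hb h)
    (fun h ↦ by
      rw [← map_neg, geomRep_inv_apply_self]
      exact hside _ (neg_mem_parabRoots hb) (by rwa [map_neg]))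
  rwa [geomRep_inv_apply_self] at this

lemma InChamber.eq_or_eq_simple_mul {f f' : EuclideanSpace ℝ (parabRoots cs I)} {u u' : W}
    (hu : u ∈ parab cs I) (hu' : u' ∈ parab cs I) (h : InChamber cs I f u)
    (h' : InChamber cs I f' u')
    (hwall : ∃ a, ∀ b ∈ rootArrangement cs I, b ≠ a → b ≠ -a → side f b = side f' b) :
    u' = u ∨ ∃ i ∈ I, u' = cs.simple i * u := by
  -- A positive root `v` made negative by `u' u⁻¹` is `u b` for a root `b` with wall `a`.
  obtain ⟨a, ha⟩ := hwall
  have hcross : ∀ v ∈ parabRoots cs I, 0 ≤ v → geomRep cs (u' * u⁻¹) v ≤ 0 →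
      side f (rootVector cs I (geomRep cs u⁻¹ v)) = 1 ∧
        (rootVector cs I (geomRep cs u⁻¹ v) = a ∨ rootVector cs I (geomRep cs u⁻¹ v) = -a) := by
    intro v hv hpos hneg
    have hb := geomRep_mem_parabRoots (inv_mem hu) hv
    have hs : side f (rootVector cs I (geomRep cs u⁻¹ v)) = 1 := by
      rw [h _ hb, geomRep_apply_inv_self, rootSign_of_nonneg hpos]
    have hs' : side f' (rootVector cs I (geomRep cs u⁻¹ v)) = -1 := by
      have := rootSign_of_nonneg (neg_nonneg.2 hneg)
      rw [((isRoot_of_mem_parabRoots hv).geomRep _).rootSign_neg] at this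
      rw [h' _ hb, ← geomRep_mul_apply]
      omega
    refine ⟨hs, or_iff_not_imp_left.2 fun hne ↦ by_contra fun hne' ↦ ?_⟩
    have := ha _ (rootVector_mem_rootArrangement hb) hne hne'
    omega
  have hy := eq_one_or_eq_simple_of_forall_geomRep_nonpos (mul_mem hu' (inv_mem hu))
    fun v hv v' hv' hpos hpos' hneg hneg' ↦ ?_
  · simpa only [mul_inv_eq_one, one_mul, mul_inv_eq_iff_eq_mul] using hy
  obtain ⟨hs, hv_a⟩ := hcross v hv hpos hneg
  obtain ⟨hs', hv'_a⟩ := hcross v' hv' hpos' hneg'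
  have heq : rootVector cs I (geomRep cs u⁻¹ v) = rootVector cs I (geomRep cs u⁻¹ v') := by
    obtain e | e := hv_a <;> obtain e' | e' := hv'_a <;> rw [e, e'] <;> rw [e] at hs <;>
      rw [e'] at hs' <;> simp only [side_neg] at hs hs' <;> omega
  exact (geomRep cs u⁻¹).injective (injOn_rootVector
    (geomRep_mem_parabRoots (inv_mem hu) hv) (geomRep_mem_parabRoots (inv_mem hu) hv') heq)

end RootArrangement

section TwistedConjugation

variable {B W : Type*} [Group W] {M : CoxeterMatrix B} {cs : CoxeterSystem M W} {J J' : Set B}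
  {δ : parab cs J ≃* parab cs J'} {v v' : W}

lemma mem_orbitOf_iff :
    v' ∈ orbitOf cs J J' δ v ↔ ∃ u : parab cs J, v' = δ u * v * (u : W)⁻¹ :=
  ⟨fun ⟨u, _, rfl, h⟩ ↦ ⟨u, h⟩, fun ⟨u, h⟩ ↦ ⟨u, v, rfl, h⟩⟩

lemma ToRel.length_le (h : ToRel cs J J' δ v v') : cs.length v' ≤ cs.length v := by
  induction h with
  | refl => exact le_rfl
  | tail _ hstep ih =>
    obtain ⟨i, hi, -, hle⟩ := hstep
    exact hle.trans ih

lemma ToRel.mem_orbitOf (h : ToRel cs J J' δ v v') : v' ∈ orbitOf cs J J' δ v := by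
  rw [mem_orbitOf_iff]
  induction h with
  | refl => exact ⟨1, by simp⟩
  | tail _ hstep ih =>
    obtain ⟨u, rfl⟩ := ih
    obtain ⟨i, hi, rfl, -⟩ := hstep
    exact ⟨sJ cs J i hi * u, by simp [sJ, mul_assoc]⟩

end TwistedConjugation

section FiniteTwistedConjugation

variable {B W : Type*} [Group W] {M : CoxeterMatrix B} {cs : CoxeterSystem M W} {I : Set B}
  {σ : parab cs I ≃* parab cs I} {τ : B → B}

/-- The permutation `x⁻¹ ∘ τ` of the roots of `W_I`.  It is the permutation for which the
agreement at a point of the chamber of `u` measures `ℓ(σ(u) x u⁻¹)`. -/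
noncomputable def IsLetterMap.twistPerm [Finite (parabRoots cs I)] (hσ : IsLetterMap cs I I σ τ)
    (x : parab cs I) : Equiv.Perm (parabRoots cs I) :=
  Equiv.ofBijective
    (fun v ↦ ⟨geomRep cs (x : W)⁻¹ (relabel τ v),
      geomRep_mem_parabRoots (inv_mem x.2) (hσ.relabel_mem_parabRoots v.2)⟩)
    (Finite.injective_iff_bijective.1 fun v v' h ↦ Subtype.ext <|
      hσ.injOn_relabel (mem_supported_of_mem_parabRoots v.2) (mem_supported_of_mem_parabRoots v'.2)
        ((geomRep cs (x : W)⁻¹).injective (congrArg Subtype.val h)))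

lemma IsLetterMap.coe_twistPerm [Finite (parabRoots cs I)] (hσ : IsLetterMap cs I I σ τ)
    (x : parab cs I) (v : parabRoots cs I) :
    (hσ.twistPerm x v : B →₀ ℝ) = geomRep cs (x : W)⁻¹ (relabel τ v) := rfl

lemma IsLetterMap.titsForm_twistPerm [Finite (parabRoots cs I)] (hσ : IsLetterMap cs I I σ τ)
    (x : parab cs I) (v w : parabRoots cs I) :
    titsForm M (hσ.twistPerm x v : B →₀ ℝ) (hσ.twistPerm x w) = titsForm M (v : B →₀ ℝ) w := by
  rw [hσ.coe_twistPerm, hσ.coe_twistPerm, titsForm_geomRep, hσ.titsForm_relabel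
    (mem_supported_of_mem_parabRoots v.2) (mem_supported_of_mem_parabRoots w.2)]

/-- The isometry of the space of the root arrangement induced by `twistPerm`. -/
noncomputable abbrev IsLetterMap.twistIsometry [Fintype (parabRoots cs I)]
    (hσ : IsLetterMap cs I I σ τ) (x : parab cs I) :
    EuclideanSpace ℝ (parabRoots cs I) ≃ₗᵢ[ℝ] EuclideanSpace ℝ (parabRoots cs I) :=
  LinearIsometryEquiv.piLpCongrLeft 2 ℝ ℝ (hσ.twistPerm x)

section Fintype

variable [Fintype (parabRoots cs I)]

theorem InChamber.agreement_eq {f : EuclideanSpace ℝ (parabRoots cs I)} {u : parab cs I}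
    (h : InChamber cs I f u) (hσ : IsLetterMap cs I I σ τ) (x : parab cs I) :
    agreement (rootArrangement cs I) (hσ.twistIsometry x) f =
      Fintype.card (parabRoots cs I) - 4 * cs.length (σ u * x * (u : W)⁻¹) := by
  classical
  set y : W := σ u * x * (u : W)⁻¹
  have hy : y ∈ parab cs I := (σ u * x * u⁻¹).2
  have hmove (v : parabRoots cs I) :
      geomRep cs (σ u * x) (hσ.twistPerm x v) = relabel τ (geomRep cs u v) := by
    rw [hσ.coe_twistPerm, geomRep_mul_apply, geomRep_apply_inv_self,
      hσ.relabel_geomRep (mem_supported_of_mem_parabRoots v.2)]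
  have hterm (v : parabRoots cs I) :
      side f (rootVector cs I v) * side f (rootVector cs I (hσ.twistPerm x v)) =
        rootSign (geomRep cs (σ u * x) (hσ.twistPerm x v)) *
          rootSign (geomRep cs y⁻¹ (geomRep cs (σ u * x) (hσ.twistPerm x v))) := by
    have hu : y⁻¹ * (σ u * x) = u := by simp [y, mul_assoc]
    rw [← geomRep_mul_apply, hu, hmove, hσ.rootSign_relabel (geomRep_mem_parabRoots u.2 v.2),
      h _ v.2, h _ (Subtype.property _)]
  rw [agreement, rootArrangement, Finset.sum_image fun v _ v' _ h ↦
    Subtype.ext (injOn_rootVector v.2 v'.2 h)]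
  simp only [piLpCongrLeft_rootVector (hσ.titsForm_twistPerm x), hterm]
  rw [Equiv.sum_comp (hσ.twistPerm x) fun v : parabRoots cs I ↦ rootSign (geomRep cs (σ u * x) v) *
      rootSign (geomRep cs y⁻¹ (geomRep cs (σ u * x) v)),
    sum_geomRep_parabRoots (mul_mem (σ u).2 x.2)
      fun v ↦ rootSign v * rootSign (geomRep cs y⁻¹ v),
    sum_rootSign_mul_rootSign_geomRep (inv_mem hy), cs.length_inv]

lemma InChamber.length_le_of_agreement_le {f f' : EuclideanSpace ℝ (parabRoots cs I)}
    {u u' : parab cs I} (h : InChamber cs I f u) (h' : InChamber cs I f' u')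
    (hσ : IsLetterMap cs I I σ τ) {x : parab cs I}
    (hle : agreement (rootArrangement cs I) (hσ.twistIsometry x) f ≤
      agreement (rootArrangement cs I) (hσ.twistIsometry x) f') :
    cs.length (σ u' * x * (u' : W)⁻¹) ≤ cs.length (σ u * x * (u : W)⁻¹) := by
  rw [h.agreement_eq hσ, h'.agreement_eq hσ] at hle
  omega

lemma InChamber.exists_toRel_of_reflTransGen (hfin : (parab cs I : Set W).Finite)
    (hσ : IsLetterMap cs I I σ τ) {x u : parab cs I}
    {f f' : EuclideanSpace ℝ (parabRoots cs I)} (h : InChamber cs I f u)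
    (hf : Relation.ReflTransGen
      (ChamberStep (rootArrangement cs I) (hσ.twistIsometry x)) f f') :
    ∃ u' : parab cs I, InChamber cs I f' u' ∧
      ToRel cs I I σ (σ u * x * (u : W)⁻¹) (σ u' * x * (u' : W)⁻¹) := by
  induction hf with
  | refl => exact ⟨u, h, .refl⟩
  | tail _ hstep ih =>
    obtain ⟨u₁, h₁, hrel⟩ := ih
    obtain ⟨u₂, hu₂, h₂⟩ := hstep.right.exists_inChamber hfin
    obtain rfl | ⟨i, hi, rfl⟩ := h₁.eq_or_eq_simple_mul u₁.2 hu₂ h₂ hstep.exists_wall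
    · exact ⟨u₁, h₂, hrel⟩
    · refine ⟨sJ cs I i hi * u₁, h₂, hrel.tail (hσ.stepRel hi ?_
        (h₁.length_le_of_agreement_le h₂ hσ hstep.agreement_le))⟩
      rw [hσ.map_sJ_mul, Subgroup.coe_mul, mul_inv_rev, sJ, cs.inv_simple]
      simp only [mul_assoc]

end Fintype

/-- The theorem of Geck, Kim and Pfeiffer, with He and Nie's proof. -/
theorem IsLetterMap.exists_toRel_mem_orbMin (hσ : IsLetterMap cs I I σ τ)
    (hfin : (parab cs I : Set W).Finite) (x : parab cs I) :
    ∃ y : parab cs I, ToRel cs I I σ x y ∧ (y : W) ∈ orbMin cs I I σ x := by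
  have := (finite_parabRoots hfin).fintype
  obtain ⟨m, hm⟩ := (isStableArrangement_rootArrangement
    (hσ.titsForm_twistPerm x)).exists_forall_agreement_eq
  have hdescend (u : parab cs I) : ∃ f u' : _, InChamber cs I f (u' : parab cs I) ∧
      agreement (rootArrangement cs I) (hσ.twistIsometry x) f = m ∧
      ToRel cs I I σ (σ u * x * (u : W)⁻¹) (σ u' * x * (u' : W)⁻¹) := by
    obtain ⟨f, hf⟩ := exists_inChamber u.2
    obtain ⟨f', hff', hm'⟩ := hm f hf.isGeneric
    obtain ⟨u', hu', hrel⟩ := hf.exists_toRel_of_reflTransGen hfin hσ hff'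
    exact ⟨f', u', hu', hm', hrel⟩
  obtain ⟨f, u, hu, hfm, hrel⟩ := hdescend 1
  refine ⟨σ u * x * u⁻¹, by simpa using hrel, ⟨u, x, rfl, rfl⟩, ?_⟩
  rintro _ ⟨v, _, rfl, rfl⟩
  obtain ⟨f', v', hv', hfm', hrel'⟩ := hdescend v
  exact (hv'.length_le_of_agreement_le hu hσ (hfm'.trans hfm.symm).le).trans (ToRel.length_le hrel')

end FiniteTwistedConjugation

section Reduction

variable {B W : Type*} [Group W] {M : CoxeterMatrix B} {cs : CoxeterSystem M W} {J J' : Set B}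
  {δ : parab cs J ≃* parab cs J'} {d : B → B} {a x y : W}

lemma orbitOf_eq_of_mem (h : y ∈ orbitOf cs J J' δ x) :
    orbitOf cs J J' δ y = orbitOf cs J J' δ x := by
  obtain ⟨u, rfl⟩ := mem_orbitOf_iff.1 h
  ext z
  rw [mem_orbitOf_iff, mem_orbitOf_iff]
  constructor
  · rintro ⟨v, rfl⟩
    exact ⟨v * u, by simp [mul_assoc]⟩
  · rintro ⟨v, rfl⟩
    exact ⟨v * u⁻¹, by simp [mul_assoc]⟩

lemma IsLetterMap.exists_toRel_mul_of_mem_orbitOf (hd : IsLetterMap cs J J' δ d) (hJ : J.Finite)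
    (ha : IsMinRep cs J a) (hx : x ∈ parab cs (Iset cs J J' δ a))
    (hy : y ∈ orbitOf cs J J' δ (a * x)) :
    ∃ u : parab cs J, (u : W) ∈ parab cs (Iset cs J J' δ a) ∧
      ∃ x' ∈ parab cs (Iset cs J J' δ a), δ u * (a * x) * (u : W)⁻¹ = a * x' ∧
        ToRel cs J J' δ y (a * x') := by
  obtain ⟨a', x', ha', hx', hrel⟩ := hd.exists_toRel_mul hJ y
  obtain ⟨u, hu⟩ := mem_orbitOf_iff.1 (orbitOf_eq_of_mem hy ▸ hrel.mem_orbitOf)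
  obtain ⟨rfl, hmem⟩ := hd.eq_and_mem_of_conj hJ ha ha' hx hx' (u := u)
    (by rw [hu, inv_mul_cancel_right, mul_assoc])
  exact ⟨u, hmem, x', hx', hu.symm, hrel⟩

variable (cs J J' δ a) in
/-- Conjugation by `a⁻¹` after `δ`, on the parabolic subgroup `W_{I(J,a,δ)}`, which it preserves. -/
noncomputable def conjHom : parab cs (Iset cs J J' δ a) →* W :=
  (MulAut.conj a⁻¹).toMonoidHom.comp <| (parab cs J').subtype.comp <|
    δ.toMonoidHom.comp (Subgroup.inclusion (parab_mono (Iset_subset a)))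

lemma mul_conjHom (u : parab cs (Iset cs J J' δ a)) :
    a * conjHom cs J J' δ a u = δ (Subgroup.inclusion (parab_mono (Iset_subset a)) u) * a := by
  simp [conjHom, mul_assoc]

lemma conjHom_injective : Function.Injective (conjHom cs J J' δ a) :=
  (MulAut.conj a⁻¹).injective.comp <| Subtype.val_injective.comp <|
    δ.injective.comp (Subgroup.inclusion_injective _)

lemma IsLetterMap.conjHom_sJ (hd : IsLetterMap cs J J' δ d) {i j : B}
    (hi : i ∈ Iset cs J J' δ a) (h : cs.simple (d i) * a = a * cs.simple j) :
    conjHom cs J J' δ a (sJ cs _ i hi) = cs.simple j := by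
  refine mul_left_cancel (a := a) ?_
  rw [mul_conjHom, ← h, ← hd i (Iset_subset a hi)]
  rfl

lemma IsLetterMap.range_conjHom (hd : IsLetterMap cs J J' δ d) (hJ : J.Finite) :
    (conjHom cs J J' δ a).range = parab cs (Iset cs J J' δ a) := by
  apply le_antisymm
  · rintro _ ⟨⟨u, hu⟩, rfl⟩
    refine Subgroup.closure_induction (p := fun u hu ↦
      conjHom cs J J' δ a ⟨u, hu⟩ ∈ parab cs (Iset cs J J' δ a)) ?_ ?_ ?_ ?_ hu
    · rintro _ ⟨i, hi, rfl⟩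
      obtain ⟨j, hj, h⟩ := hd.Iset_subset_movable hJ a hi
      exact (hd.conjHom_sJ hi h).symm ▸ simple_mem_parab hj
    · exact (map_one (conjHom cs J J' δ a)).symm ▸ one_mem _
    · intro u v hu hv hu' hv'
      exact (map_mul (conjHom cs J J' δ a) ⟨u, hu⟩ ⟨v, hv⟩).symm ▸ mul_mem hu' hv'
    · intro u hu hu'
      exact (map_inv (conjHom cs J J' δ a) ⟨u, hu⟩).symm ▸ inv_mem hu'
  · refine (Subgroup.closure_le _).2 ?_
    rintro _ ⟨k, hk, rfl⟩
    obtain ⟨j, hjJ, hj, e⟩ := (wSpecial_Iset J J' δ a).2 k hk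
    exact ⟨sJ cs _ j hj, hd.conjHom_sJ hj (by rw [← hd j hjJ, ← e, inv_mul_cancel_right])⟩

lemma IsLetterMap.exists_twist (hd : IsLetterMap cs J J' δ d) (hJ : J.Finite) (a : W) :
    ∃ (σ : parab cs (Iset cs J J' δ a) ≃* parab cs (Iset cs J J' δ a)) (τ : B → B),
      IsLetterMap cs _ _ σ τ ∧ ∀ u : parab cs (Iset cs J J' δ a), a * (σ u : W) =
        δ (Subgroup.inclusion (parab_mono (Iset_subset a)) u) * a := by
  choose! τ _ hτ using hd.Iset_subset_movable hJ a
  exact ⟨(MonoidHom.ofInjective conjHom_injective).trans (.subgroupCongr (hd.range_conjHom hJ)), τ,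
    fun i hi ↦ hd.conjHom_sJ hi (hτ hi), mul_conjHom⟩

lemma ToRel.mul_left {I : Set B} {σ : parab cs I ≃* parab cs I} (hIJ : I ⊆ J)
    (hσ : ∀ u : parab cs I, a * (σ u : W) = δ (Subgroup.inclusion (parab_mono hIJ) u) * a)
    (ha : IsMinRep cs J a) (hx : x ∈ parab cs I) (h : ToRel cs I I σ x y) :
    y ∈ parab cs I ∧ ToRel cs J J' δ (a * x) (a * y) := by
  induction h with
  | refl => exact ⟨hx, .refl⟩
  | @tail y _ _ hstep ih =>
    obtain ⟨hy, hrel⟩ := ih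
    obtain ⟨i, hi, rfl, hlen⟩ := hstep
    have hy' := mul_mem (mul_mem (σ (sJ cs I i hi)).2 hy) (simple_mem_parab hi)
    refine ⟨hy', hrel.tail ⟨i, hIJ hi, ?_, ?_⟩⟩
    · rw [← mul_assoc, ← mul_assoc, hσ, ← mul_assoc]
      rfl
    · rw [ha.length_mul (parab_mono hIJ hy'), ha.length_mul (parab_mono hIJ hy)]
      exact Nat.add_le_add_left hlen _

theorem IsLetterMap.exists_toRel_mul_forall_length_le (hd : IsLetterMap cs J J' δ d)
    (hJ : J.Finite) (ha : IsMinRep cs J a) (hx : x ∈ parab cs (Iset cs J J' δ a))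
    (hfin : (parab cs (Iset cs J J' δ a) : Set W).Finite) :
    ∃ z ∈ parab cs (Iset cs J J' δ a), ToRel cs J J' δ (a * x) (a * z) ∧
      ∀ y ∈ orbitOf cs J J' δ (a * x), cs.length (a * z) ≤ cs.length y := by
  have hIJ := parab_mono (cs := cs) (Iset_subset (J' := J') (δ := δ) a)
  obtain ⟨σ, τ, hστ, hσ⟩ := hd.exists_twist hJ a
  obtain ⟨⟨z, hz⟩, hxz, -, hmin⟩ := hστ.exists_toRel_mem_orbMin hfin ⟨x, hx⟩
  refine ⟨z, hz, (ToRel.mul_left (Iset_subset a) hσ ha hx hxz).2, fun y hy ↦ ?_⟩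
  obtain ⟨u, hu, x', hx', hconj, hrel⟩ := hd.exists_toRel_mul_of_mem_orbitOf hJ ha hx hy
  have hx'_orbit : x' ∈ orbitOf cs _ _ σ x := by
    refine mem_orbitOf_iff.2 ⟨⟨u, hu⟩, mul_left_cancel (a := a) ?_⟩
    rw [← hconj, ← mul_assoc, ← mul_assoc, ← mul_assoc, hσ]
    rfl
  calc
    cs.length (a * z) = cs.length a + cs.length z := ha.length_mul (hIJ hz)
    _ ≤ cs.length a + cs.length x' := Nat.add_le_add_left (hmin x' hx'_orbit) _
    _ = cs.length (a * x') := (ha.length_mul (hIJ hx')).symm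
    _ ≤ cs.length y := hrel.length_le

theorem stmt6_general (hδ : MapsSimples cs J J' δ) (hJ : J.Finite) {w w' : W}
    (hw' : IsMinRep cs J w') (hproj : w ∈ orbSet cs J J' δ (coset cs J J' δ w'))
    (hfin : (parab cs (Iset cs J J' δ w') : Set W).Finite) :
    ∃ x ∈ parab cs (Iset cs J J' δ w'), ToRel cs J J' δ w (w' * x) ∧
      ∀ y ∈ orbitOf cs J J' δ w, cs.length (w' * x) ≤ cs.length y := by
  obtain ⟨d, hd⟩ := hδ.exists_isLetterMap
  obtain ⟨u, _, ⟨v, hv, rfl⟩, hw⟩ := hproj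
  obtain ⟨-, -, x, hx, -, hwx⟩ :=
    hd.exists_toRel_mul_of_mem_orbitOf hJ hw' hv (mem_orbitOf_iff.2 ⟨u, hw⟩)
  obtain ⟨z, hz, hxz, hmin⟩ := hd.exists_toRel_mul_forall_length_le hJ hw' hx hfin
  exact ⟨z, hz, hwx.trans hxz, orbitOf_eq_of_mem hwx.mem_orbitOf ▸ hmin⟩

end Reduction

/-- Assume `W_J` is finite. If `w' = π_{J,δ}(w)`, then
`w →_{J,δ} w' x` for some `x ∈ W_{I(J,w',δ)}` such that `w' x` has minimal
length in the `δ`-twisted `W_J`-conjugacy class of `w`. -/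
theorem stmt6 (hδ : MapsSimples cs J J' δ)
    (hfin : (parab cs J : Set W).Finite)
    (w w' : W) (hw' : IsMinRep cs J w')
    (hproj : w ∈ orbSet cs J J' δ (coset cs J J' δ w')) :
    ∃ x ∈ parab cs (Iset cs J J' δ w'), ToRel cs J J' δ w (w' * x) ∧
      ∀ y ∈ orbitOf cs J J' δ w, cs.length (w' * x) ≤ cs.length y :=
  stmt6_general hδ J.toFinite hw' hproj (hfin.subset (parab_mono (Iset_subset w')))

end PartialConjugation
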